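/- arXiv:1304.6607 — 7 statements merged into one kernel-verified Lean document; each statement's English description precedes it below -/
import Mathlib

section
/- Let G be a finite simple connected graph with the property that for any two edges e and e' of G with e ∩ e' = ∅ there exists an edge e'' of G with e ∩ e'' ≠ ∅ and e' ∩ e'' ≠ ∅ (equivalently, the complement graph of G is weakly chordal). Then bar(I_{A_G}) = μ(I_{A_G}). -/
open MvPolynomial

/-- The `K`-algebra homomorphism `K[x_e : e ∈ E(G)] → K[t_v : v ∈ V(G)]`
sending `x_e ↦ t_u t_w` for each edge `e = {u,w}`. -/
noncomputable def graphHom (K : Type*) [Field K] {V : Type*} (G : SimpleGraph V) :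
    MvPolynomial G.edgeSet K →ₐ[K] MvPolynomial V K :=
  aeval (fun e : G.edgeSet =>
    Sym2.lift ⟨fun u w => X u * X w, fun u w => mul_comm _ _⟩ (e : Sym2 V))

/-- The toric ideal `I_{A_G}` of the graph `G`. -/
noncomputable def toricIdealGraph (K : Type*) [Field K] {V : Type*} (G : SimpleGraph V) :
    Ideal (MvPolynomial G.edgeSet K) :=
  RingHom.ker (graphHom K G).toRingHom

/-- A binomial: a difference of two (monic) monomials. -/
def IsBinom {K : Type*} [Field K] {σ : Type*} (f : MvPolynomial σ K) : Prop :=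
  ∃ u v : σ →₀ ℕ, f = monomial u 1 - monomial v 1

/-- `μ(I)`: the smallest cardinality of a binomial generating set of `I`. -/
noncomputable def muI {K : Type*} [Field K] {σ : Type*} (I : Ideal (MvPolynomial σ K)) : ℕ :=
  sInf {t | ∃ B : Finset (MvPolynomial σ K), B.card = t ∧
        (∀ f ∈ B, IsBinom f) ∧ Ideal.span (B : Set (MvPolynomial σ K)) = I}

/-- `bar(I)`: the smallest `s` such that there are binomials `B_1,…,B_s ∈ I`
with `rad(I) = rad((B_1,…,B_s))`. -/
noncomputable def barI {K : Type*} [Field K] {σ : Type*} (I : Ideal (MvPolynomial σ K)) : ℕ :=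
  sInf {s | ∃ B : Fin s → MvPolynomial σ K,
        (∀ j, IsBinom (B j) ∧ B j ∈ I) ∧
        I.radical = (Ideal.span (Set.range B)).radical}


/-! ### Exponent vectors, degrees -/

noncomputable def tgEps {V : Type*} (e : Sym2 V) : V →₀ ℕ :=
  Sym2.lift ⟨fun a b => Finsupp.single a 1 + Finsupp.single b 1, fun _ _ => add_comm _ _⟩ e

noncomputable def tgDeg {V : Type*} (G : SimpleGraph V) : (G.edgeSet →₀ ℕ) →ₗ[ℕ] (V →₀ ℕ) :=
  Finsupp.linearCombination ℕ (fun e : G.edgeSet => tgEps e.1)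

open Classical in
noncomputable def tgEd {V : Type*} (G : SimpleGraph V) (x y : V) : G.edgeSet →₀ ℕ :=
  if h : G.Adj x y then Finsupp.single ⟨s(x, y), h⟩ 1 else 0

/-- same degree and a common variable -/
def tgSh {V : Type*} (G : SimpleGraph V) (u v : G.edgeSet →₀ ℕ) : Prop :=
  tgDeg G u = tgDeg G v ∧ ∃ e, u e ≠ 0 ∧ v e ≠ 0

def tgCn {V : Type*} (G : SimpleGraph V) (u v : G.edgeSet →₀ ℕ) : Prop :=
  Relation.EqvGen (tgSh G) u v

def tgGap {V : Type*} (G : SimpleGraph V) : Prop :=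
  ∀ a b c d, G.Adj a b → G.Adj c d → a ≠ c → a ≠ d → b ≠ c → b ≠ d →
    G.Adj a c ∨ G.Adj a d ∨ G.Adj b c ∨ G.Adj b d

section tg
variable {V : Type*} {G : SimpleGraph V}

lemma tgDeg_ed {x y : V} (h : G.Adj x y) :
    tgDeg G (tgEd G x y) = Finsupp.single x 1 + Finsupp.single y 1 := by
  simp [tgDeg, tgEd, h, tgEps]

lemma tgEd_comm (x y : V) : tgEd G x y = tgEd G y x := by
  unfold tgEd
  by_cases h : G.Adj x y
  · have h' := h.symm
    simp only [h, h', dite_true]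
    congr 2
    exact Sym2.eq_swap
  · have h' : ¬ G.Adj y x := fun k => h k.symm
    simp [h, h']

lemma tgEd_ne {x y : V} (h : G.Adj x y) : tgEd G x y ≠ 0 := by
  simp [tgEd, h]

lemma tgEd_apply {x y : V} (h : G.Adj x y) : tgEd G x y ⟨s(x, y), h⟩ = 1 := by
  simp [tgEd, h]

/-- a vertex of positive degree is on an edge -/
lemma tgDeg_pos {u : G.edgeSet →₀ ℕ} {a : V} (h : tgDeg G u a ≠ 0) :
    ∃ x u', G.Adj a x ∧ u = tgEd G a x + u' := by
  classical
  have : ∃ e ∈ u.support, tgEps e.1 a ≠ 0 := by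
    by_contra hc
    push Not at hc
    apply h
    rw [tgDeg, Finsupp.linearCombination_apply, Finsupp.sum, Finsupp.finsetSum_apply]
    apply Finset.sum_eq_zero
    intro e he
    simp [hc e he]
  obtain ⟨⟨e, he⟩, h1, h2⟩ := this
  induction e using Sym2.ind with
  | _ x y =>
    have hadj : G.Adj x y := he
    have h1' : u ⟨s(x, y), he⟩ ≠ 0 := by simpa using h1
    have key : u = tgEd G x y + (u - tgEd G x y) := by
      rw [add_tsub_cancel_of_le]
      simp only [tgEd, hadj, dite_true, Finsupp.single_le_iff]
      omega
    have h3 : a = x ∨ a = y := by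
      by_contra hc
      push Not at hc
      apply h2
      simp [tgEps, Finsupp.single_apply, hc.1.symm, hc.2.symm]
    rcases h3 with rfl | rfl
    · exact ⟨y, _, hadj, key⟩
    · exact ⟨x, u - tgEd G x a, hadj.symm, by rw [tgEd_comm a x]; exact key⟩

lemma tgExists {u : G.edgeSet →₀ ℕ} (h : u ≠ 0) :
    ∃ x y u', G.Adj x y ∧ u = tgEd G x y + u' := by
  classical
  obtain ⟨⟨e, he⟩, h1⟩ := Finsupp.ne_iff.1 h
  induction e using Sym2.ind with
  | _ x y =>
    have hadj : G.Adj x y := he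
    refine ⟨x, y, u - tgEd G x y, hadj, ?_⟩
    rw [add_tsub_cancel_of_le]
    simp only [tgEd, hadj, dite_true, Finsupp.single_le_iff]
    have : u ⟨s(x, y), he⟩ ≠ 0 := by simpa using h1
    omega

lemma tgDeg_ne {u : G.edgeSet →₀ ℕ} (h : u ≠ 0) : tgDeg G u ≠ 0 := by
  obtain ⟨x, y, u', hadj, rfl⟩ := tgExists h
  intro hc
  have := DFunLike.congr_fun hc x
  rw [map_add, tgDeg_ed hadj] at this
  simp at this

lemma tgSh_of {u v p p' q : G.edgeSet →₀ ℕ} (hd : tgDeg G u = tgDeg G v) (hp : p ≠ 0)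
    (hu : u = p + p') (hv : v = p + q) : tgSh G u v := by
  refine ⟨hd, ?_⟩
  obtain ⟨e, he⟩ := Finsupp.ne_iff.1 hp
  refine ⟨e, ?_, ?_⟩
  · rw [hu]; simp at he ⊢; omega
  · rw [hv]; simp at he ⊢; omega

lemma tgBal {u v p p' q q' : G.edgeSet →₀ ℕ} (hd : tgDeg G u = tgDeg G v)
    (hu : u = p + p') (hv : v = q + q') (h : tgDeg G p = tgDeg G q) (hp : p ≠ 0) (hp' : p' ≠ 0) :
    tgCn G u v := by
  have hq : q ≠ 0 := by
    rintro rfl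
    exact tgDeg_ne hp (by simpa using h)
  have h1 : tgDeg G u = tgDeg G (q + p') := by rw [hu, map_add, map_add, h]
  exact .trans _ _ _ (.rel _ _ (tgSh_of (p := p') h1 hp' (by rw [hu, add_comm]) (add_comm _ _)))
    (.rel _ _ (tgSh_of (p := q) (h1.symm.trans hd) hq rfl hv))

/-- walking lemma -/
lemma tgWalk {u v : G.edgeSet →₀ ℕ} (hd : tgDeg G u = tgDeg G v) {w : V} (hw : 2 ≤ tgDeg G u w)
    (hn : ¬ tgCn G u v) :
    ∀ (n : ℕ) (p p' q q' : G.edgeSet →₀ ℕ) (a : V), p'.degree = n → u = p + p' → v = q + q' →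
      tgDeg G p = tgDeg G q + Finsupp.single w 1 + Finsupp.single a 1 → tgDeg G q w = 0 →
      ∃ p p' q q', u = p + p' ∧ v = q + q' ∧
        tgDeg G p = tgDeg G q + Finsupp.single w 1 + Finsupp.single w 1 := by
  classical
  intro n
  induction n using Nat.strong_induction_on with
  | _ n ih =>
  intro p p' q q' a hnp hu hv hpq hqw
  by_cases haw : a = w
  · subst haw; exact ⟨p, p', q, q', hu, hv, hpq⟩
  have e0 : ∀ x, tgDeg G p x + tgDeg G p' x = tgDeg G q x + tgDeg G q' x := by
    intro x
    have := DFunLike.congr_fun hd x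
    rw [hu, hv] at this
    simpa using this
  have e1 : ∀ x, tgDeg G p x = tgDeg G q x + Finsupp.single w 1 x + Finsupp.single a 1 x := by
    intro x
    have := DFunLike.congr_fun hpq x
    simpa using this
  have hq'a : tgDeg G q' a ≠ 0 := by
    have h1 := e0 a
    have h2 := e1 a
    simp at h2
    omega
  obtain ⟨x, q'', hax, rfl⟩ := tgDeg_pos hq'a
  by_cases hxw : x = w
  · subst hxw
    exfalso
    refine hn (tgBal (p := p) (p' := p') (q := q + tgEd G a x) (q' := q'') hd hu ?_ ?_ ?_ ?_)
    · rw [hv, add_assoc]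
    · rw [map_add, tgDeg_ed hax, hpq]; abel
    · rintro rfl
      have := e1 x
      simp at this
      omega
    · rintro rfl
      have h1 := e1 x
      have h2 : tgDeg G u x = tgDeg G p x := by rw [hu]; simp
      have : Finsupp.single a 1 x = 0 := by simp [Finsupp.single_apply, haw]
      simp [Finsupp.single_apply, haw] at h1
      omega
  · have hp'x : tgDeg G p' x ≠ 0 := by
      have h1 := e0 x
      have h2 := e1 x
      rw [map_add, tgDeg_ed hax] at h1
      simp [Finsupp.single_apply, Ne.symm hxw] at h1 h2
      omega
    obtain ⟨y, p'', hxy, rfl⟩ := tgDeg_pos hp'x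
    refine ih p''.degree ?_ (p + tgEd G x y) p'' (q + tgEd G a x) q'' y rfl ?_ ?_ ?_ ?_
    · rw [← hnp, map_add]
      have : (tgEd G x y).degree = 1 := by simp [tgEd, hxy]
      omega
    · rw [hu, add_assoc]
    · rw [hv, add_assoc]
    · rw [map_add, map_add, tgDeg_ed hax, tgDeg_ed hxy, hpq]; abel
    · rw [map_add, tgDeg_ed hax]
      simp [Finsupp.single_apply, hxw, haw, hqw]

lemma tgHalf {p q : G.edgeSet →₀ ℕ} {w : V}
    (h : tgDeg G p = tgDeg G q + Finsupp.single w 1 + Finsupp.single w 1) :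
    ∃ a a', G.Adj a a' ∧ ∀ α, (α = a ∨ α = a') → ∃ P P' Q Q', p = P + P' ∧ q = Q + Q' ∧ P ≠ 0 ∧
      tgDeg G P + Finsupp.single α 1 = tgDeg G Q + Finsupp.single w 1 := by
  classical
  have hpw : tgDeg G p w ≠ 0 := by rw [h]; simp
  obtain ⟨a, p1, hwa, rfl⟩ := tgDeg_pos hpw
  have hne : w ≠ a := hwa.ne
  have e1 := fun x => DFunLike.congr_fun h x
  rw [map_add, tgDeg_ed hwa] at e1
  have hqa : tgDeg G q a ≠ 0 := by
    have := e1 a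
    simp [Finsupp.single_apply, hne] at this
    omega
  obtain ⟨a2, q1, haa, rfl⟩ := tgDeg_pos hqa
  refine ⟨a, a2, haa, ?_⟩
  rintro α (rfl | rfl)
  · refine ⟨p1, tgEd G w α, tgEd G α a2 + q1, 0, add_comm _ _, by simp, ?_, ?_⟩
    · rintro rfl
      have := e1 w
      simp [Finsupp.single_apply, hne.symm] at this
    · ext x
      have := e1 x
      simp at this ⊢
      omega
  · refine ⟨tgEd G w a, p1, tgEd G a α, q1, rfl, rfl, tgEd_ne hwa, ?_⟩
    rw [tgDeg_ed hwa, tgDeg_ed haa]; abel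

/-- non-squarefree degrees are connected -/
lemma tgNonsq (hG : tgGap G) {u v : G.edgeSet →₀ ℕ} (hd : tgDeg G u = tgDeg G v) {w : V}
    (hw : 2 ≤ tgDeg G u w) : tgCn G u v := by
  classical
  by_contra hn
  have huw : tgDeg G u w ≠ 0 := by omega
  obtain ⟨a, u', hwa, hu'⟩ := tgDeg_pos huw
  obtain ⟨p, p', q, q', hu, hv, hpq⟩ := tgWalk hd hw hn _ (tgEd G w a) u' 0 v a rfl hu' (by simp)
    (by rw [tgDeg_ed hwa]; simp) (by simp)
  have hqp : tgDeg G q' = tgDeg G p' + Finsupp.single w 1 + Finsupp.single w 1 := by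
    rw [hu, hv, map_add, map_add, hpq] at hd
    ext x
    have := DFunLike.congr_fun hd x
    simp at this ⊢
    omega
  obtain ⟨a, a', haa, hα⟩ := tgHalf hpq
  obtain ⟨b, b', hbb, hβ⟩ := tgHalf hqp
  have main : ∀ α β, (α = a ∨ α = a') → (β = b ∨ β = b') → α = β ∨ G.Adj α β → False := by
    intro α β h1 h2 h3
    obtain ⟨P, P', Q, Q', hP, hQ, hP0, hPQ⟩ := hα α h1
    obtain ⟨Q2, Q2', P2, P2', hQ2, hP2, hQ20, hPQ2⟩ := hβ β h2
    have f1 := fun x => DFunLike.congr_fun hPQ x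
    have f2 := fun x => DFunLike.congr_fun hPQ2 x
    have f3 := fun x => DFunLike.congr_fun hpq x
    have f4 := fun x => DFunLike.congr_fun hqp x
    simp only [hP, hQ, hP2, hQ2, map_add, Finsupp.add_apply] at f1 f2 f3 f4
    rcases h3 with rfl | hadj
    · refine hn (tgBal (p := P + P2) (p' := P' + P2') (q := Q + Q2) (q' := Q' + Q2') hd
        (by rw [hu, hP, hP2]; abel) (by rw [hv, hQ, hQ2]; abel) ?_ ?_ ?_)
      · ext x
        have := f1 x
        have := f2 x
        simp
        omega
      · intro hc
        exact hP0 (by simpa using (add_eq_zero.1 hc).1)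
      · intro hc
        have hP'0 : P' = 0 := (add_eq_zero.1 hc).1
        have g1 := f1 w
        have g3 := f3 w
        simp [hP'0] at g1 g3
        omega
    · have hdt : tgDeg G u = tgDeg G (tgEd G α β + P + Q' + Q2 + P2') := by
        ext x
        have := f1 x
        have := f2 x
        have := f3 x
        have := f4 x
        rw [hu, hP, hP2]
        simp only [map_add, tgDeg_ed hadj, Finsupp.add_apply]
        omega
      refine hn (.trans _ (tgEd G α β + P + Q' + Q2 + P2') _
        (.rel _ _ (tgSh_of (p := P) hdt hP0 (p' := P' + p')
          (by rw [hu, hP]; abel) (q := tgEd G α β + Q' + Q2 + P2') (by abel)))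
        (.rel _ _ (tgSh_of (p := Q2) (hdt.symm.trans hd) hQ20
          (p' := tgEd G α β + P + Q' + P2') (by abel) (q := q + Q2') (by rw [hv, hQ2]; abel))))
  by_cases c1 : a = b
  · exact main a b (.inl rfl) (.inl rfl) (.inl c1)
  by_cases c2 : a = b'
  · exact main a b' (.inl rfl) (.inr rfl) (.inl c2)
  by_cases c3 : a' = b
  · exact main a' b (.inr rfl) (.inl rfl) (.inl c3)
  by_cases c4 : a' = b'
  · exact main a' b' (.inr rfl) (.inr rfl) (.inl c4)
  rcases hG a a' b b' haa hbb c1 c2 c3 c4 with k | k | k | k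
  · exact main a b (.inl rfl) (.inl rfl) (.inr k)
  · exact main a b' (.inl rfl) (.inr rfl) (.inr k)
  · exact main a' b (.inr rfl) (.inl rfl) (.inr k)
  · exact main a' b' (.inr rfl) (.inr rfl) (.inr k)

lemma tgEd_split {u : G.edgeSet →₀ ℕ} {x y : V} (h : G.Adj x y) (hu : u ⟨s(x, y), h⟩ ≠ 0) :
    u = tgEd G x y + (u - tgEd G x y) := by
  rw [add_tsub_cancel_of_le]
  simp only [tgEd, h, dite_true, Finsupp.single_le_iff]
  omega

lemma tgEd_apply_ne {x y x' y' : V} (h' : G.Adj x' y')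
    (he : tgEd G x y ⟨s(x', y'), h'⟩ ≠ 0) : s(x, y) = s(x', y') := by
  classical
  unfold tgEd at he
  by_cases h : G.Adj x y
  · simp only [h, dite_true] at he
    by_contra hc
    apply he
    rw [Finsupp.single_apply, if_neg]
    simpa [Subtype.ext_iff] using hc
  · simp [h] at he

lemma tg_apply_le_deg (u : G.edgeSet →₀ ℕ) {x y : V} (h : G.Adj x y) :
    u ⟨s(x, y), h⟩ ≤ tgDeg G u x := by
  classical
  have h1 : u = u ⟨s(x, y), h⟩ • tgEd G x y + (u - u ⟨s(x, y), h⟩ • tgEd G x y) := by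
    rw [add_tsub_cancel_of_le]
    simp [tgEd, h, Finsupp.single_le_iff]
  have h2 : tgDeg G u x = u ⟨s(x, y), h⟩ * (Finsupp.single x 1 + Finsupp.single y 1 : V →₀ ℕ) x
      + tgDeg G (u - u ⟨s(x, y), h⟩ • tgEd G x y) x := by
    conv_lhs => rw [h1]
    rw [map_add, map_smul, tgDeg_ed h, Finsupp.add_apply, Finsupp.smul_apply, smul_eq_mul]
  simp at h2
  nlinarith

lemma tg_le_of {p u : G.edgeSet →₀ ℕ} (hs : ∀ e, p e ≠ 0 → u e ≠ 0)
    (hp : ∀ x, tgDeg G p x ≤ 1) : p ≤ u := by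
  intro e
  by_cases h : p e = 0
  · omega
  have h1 := hs e h
  obtain ⟨e, he⟩ := e
  induction e using Sym2.ind with
  | _ x y =>
    have := tg_apply_le_deg p (x := x) (y := y) he
    have := hp x
    omega

lemma tg_eq_of_le {p u : G.edgeSet →₀ ℕ} (h : p ≤ u) (hd : tgDeg G p = tgDeg G u) : p = u := by
  by_contra hc
  have h1 : u = p + (u - p) := (add_tsub_cancel_of_le h).symm
  have h2 : u - p ≠ 0 := by
    intro h0
    rw [h0, add_zero] at h1
    exact hc h1.symm
  apply tgDeg_ne h2
  rw [h1, map_add] at hd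
  simpa using hd

lemma tgPartner {u : G.edgeSet →₀ ℕ} (hsq : ∀ x, tgDeg G u x ≤ 1) :
    ∃ π : V → V, Function.Involutive π ∧
      ∀ x, tgDeg G u x ≠ 0 → G.Adj x (π x) ∧ tgDeg G u (π x) ≠ 0 ∧
        ∃ r, u = tgEd G x (π x) + r := by
  classical
  have key : ∀ x, tgDeg G u x ≠ 0 → ∃ y, G.Adj x y ∧ ∃ r, u = tgEd G x y + r := by
    intro x hx
    obtain ⟨y, r, h1, h2⟩ := tgDeg_pos hx
    exact ⟨y, h1, r, h2⟩
  choose! f hf1 hf2 using key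
  have hf3 : ∀ x, tgDeg G u x ≠ 0 → tgDeg G u (f x) ≠ 0 := by
    intro x hx
    obtain ⟨r, hr⟩ := hf2 x hx
    rw [hr, map_add, tgDeg_ed (hf1 x hx)]
    simp
  refine ⟨fun x => if tgDeg G u x ≠ 0 then f x else x, ?_, ?_⟩
  · intro x
    by_cases hx : tgDeg G u x ≠ 0
    · have hy := hf3 x hx
      simp only [hx, hy, ne_eq, not_false_eq_true, if_true]
      obtain ⟨r, hr⟩ := hf2 x hx
      obtain ⟨r', hr'⟩ := hf2 _ hy
      by_contra hne
      have a1 := hf1 x hx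
      have a2 := hf1 _ hy
      have h0 : u ⟨s(f x, f (f x)), a2⟩ ≠ 0 := by
        rw [hr', Finsupp.add_apply, tgEd_apply a2]; omega
      have h1 : tgEd G x (f x) ⟨s(f x, f (f x)), a2⟩ = 0 := by
        by_contra hc
        have := tgEd_apply_ne a2 hc
        rw [Sym2.eq_iff] at this
        rcases this with ⟨h, _⟩ | ⟨h, _⟩
        · exact a1.ne h
        · exact hne h.symm
      rw [hr, Finsupp.add_apply, h1, zero_add] at h0
      have h2 := tg_apply_le_deg r a2
      have h3 := hsq (f x)
      rw [hr, map_add, tgDeg_ed a1] at h3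
      simp at h3
      omega
    · simp [hx]
  · intro x hx
    simp only [hx, ne_eq, not_false_eq_true, if_true]
    exact ⟨hf1 x hx, hf3 x hx, hf2 x hx⟩

noncomputable def tgT (c : ℤ → V) (s : ℤ) (m : ℕ) : V →₀ ℕ :=
  ∑ l ∈ Finset.range m, Finsupp.single (c (s + l)) 1

noncomputable def tgS (G : SimpleGraph V) (c : ℤ → V) (s : ℤ) (m : ℕ) : G.edgeSet →₀ ℕ :=
  ∑ l ∈ Finset.range m, tgEd G (c (s + 2 * l)) (c (s + 2 * l + 1))

lemma tgT_add (c : ℤ → V) (s : ℤ) (m k : ℕ) :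
    tgT c s (m + k) = tgT c s m + tgT c (s + m) k := by
  unfold tgT
  rw [Finset.sum_range_add]
  congr 1
  apply Finset.sum_congr rfl
  intro l _
  congr 2
  push_cast
  ring

lemma tgT_one (c : ℤ → V) (s : ℤ) : tgT c s 1 = Finsupp.single (c s) 1 := by
  simp [tgT]

lemma tgDeg_S (c : ℤ → V) (hc : ∀ i, G.Adj (c i) (c (i + 1))) (s : ℤ) (m : ℕ) :
    tgDeg G (tgS G c s m) = tgT c s (2 * m) := by
  induction m with
  | zero => simp [tgS, tgT]
  | succ m ih =>
    have : tgS G c s (m + 1) = tgS G c s m + tgEd G (c (s + 2 * m)) (c (s + 2 * m + 1)) := by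
      unfold tgS; rw [Finset.sum_range_succ]
    rw [this, map_add, ih, tgDeg_ed (hc _)]
    rw [show 2 * (m + 1) = 2 * m + (1 + 1) by ring, tgT_add, tgT_add, tgT_one, tgT_one]
    push_cast
    rfl

lemma tgS_succ (c : ℤ → V) (s : ℤ) (m : ℕ) :
    tgS G c s (m + 1) = tgEd G (c s) (c (s + 1)) + tgS G c (s + 2) m := by
  unfold tgS
  rw [Finset.sum_range_succ', add_comm]
  congr 1
  · simp
  · apply Finset.sum_congr rfl
    intro l _
    congr 2 <;> · push_cast; ring

lemma tgT_rot (c : ℤ → V) (N : ℕ) (hp : ∀ i, c (i + N) = c i) (s : ℤ) :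
    tgT c s N = tgT c 0 N := by
  have step : ∀ s, tgT c (s + 1) N = tgT c s N := by
    intro s
    have h1 := tgT_add c s N 1
    have h2 := tgT_add c s 1 N
    rw [add_comm 1 N, h1, tgT_one, tgT_one, hp, add_comm] at h2
    push_cast at h2
    exact (add_left_cancel h2).symm
  induction s using Int.induction_on with
  | zero => rfl
  | succ i ih => rw [step, ih]
  | pred i ih => rw [← ih, ← step (-(i : ℤ) - 1)]; congr 1; ring

lemma tgS_support (c : ℤ → V) (s : ℤ) (m : ℕ) (e) (h : tgS G c s m e ≠ 0) :
    ∃ l : ℕ, tgEd G (c (s + 2 * l)) (c (s + 2 * l + 1)) e ≠ 0 := by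
  unfold tgS at h
  rw [Finsupp.finsetSum_apply] at h
  obtain ⟨l, _, hl⟩ := Finset.exists_ne_zero_of_sum_ne_zero h
  exact ⟨l, hl⟩

lemma tgT_le_one (c : ℤ → V) (N : ℕ) (hinj : ∀ i j, c i = c j → ∃ k : ℤ, j = i + N * k) (s : ℤ)
    (x : V) : tgT c s N x ≤ 1 := by
  classical
  unfold tgT
  rw [Finsupp.finsetSum_apply]
  simp only [Finsupp.single_apply]
  rw [Finset.sum_ite, Finset.sum_const_zero, add_zero, Finset.sum_const, smul_eq_mul, mul_one,
    Finset.card_le_one]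
  intro a ha b hb
  simp only [Finset.mem_filter, Finset.mem_range] at ha hb
  obtain ⟨k, hk⟩ := hinj _ _ (ha.2.trans hb.2.symm)
  have h3 : (b : ℤ) - a = N * k := by linarith
  have hk0 : k = 0 := by
    have h4 : (b : ℤ) - a < N := by omega
    have h5 : -(N : ℤ) < (b : ℤ) - a := by omega
    rw [h3] at h4 h5
    have hN : (0 : ℤ) < N := by omega
    have : k < 1 := by nlinarith
    have : -1 < k := by nlinarith
    omega
  rw [hk0] at h3
  omega

structure tgCyc (G : SimpleGraph V) (u v : G.edgeSet →₀ ℕ) (n : ℕ) (c : ℤ → V) : Prop where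
  pos : 0 < n
  per : ∀ i, c (i + 2 * n) = c i
  adj : ∀ i, G.Adj (c i) (c (i + 1))
  hu : ∀ i, Even i → ∃ r, u = tgEd G (c i) (c (i + 1)) + r
  hv : ∀ i, ¬ Even i → ∃ r, v = tgEd G (c i) (c (i + 1)) + r
  deg : ∀ s, tgDeg G u = tgT c s (2 * n)
  inj : ∀ i j, c i = c j → ∃ k : ℤ, j = i + 2 * n * k

lemma tgCycle [Finite V] {u v : G.edgeSet →₀ ℕ} (hd : tgDeg G u = tgDeg G v)
    (hsq : ∀ x, tgDeg G u x ≤ 1) (hn : ¬ tgCn G u v) : ∃ n c, tgCyc G u v n c := by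
  classical
  have hu0 : u ≠ 0 := by
    rintro rfl
    have : v = 0 := by
      by_contra hv
      exact tgDeg_ne hv (by simpa using hd.symm)
    exact hn (this ▸ .refl _)
  obtain ⟨w, _, _, hw, hwu⟩ := tgExists hu0
  have hw0 : tgDeg G u w ≠ 0 := by
    rw [hwu, map_add, tgDeg_ed hw]; simp
  obtain ⟨f, hf, hfu⟩ := tgPartner hsq
  obtain ⟨g, hg, hgv⟩ := tgPartner (u := v) (by rw [← hd]; exact hsq)
  rw [← hd] at hgv
  let σ : Equiv.Perm V := hg.toPerm * hf.toPerm
  have hσ : ∀ x, σ x = g (f x) := fun x => rfl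
  have hmem : ∀ (i : ℤ), tgDeg G u ((σ ^ i) w) ≠ 0 := by
    have s1 : ∀ x, tgDeg G u x ≠ 0 → tgDeg G u (σ x) ≠ 0 := fun x hx =>
      (hgv _ (hfu x hx).2.1).2.1
    have s2 : ∀ x, tgDeg G u x ≠ 0 → tgDeg G u (σ⁻¹ x) ≠ 0 := fun x hx =>
      (hfu _ (hgv x hx).2.1).2.1
    intro i
    induction i using Int.induction_on with
    | zero => simpa using hw0
    | succ i ih =>
      rw [add_comm, zpow_add, zpow_one, Equiv.Perm.mul_apply]
      exact s1 _ ih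
    | pred i ih =>
      rw [sub_eq_add_neg, add_comm, zpow_add, zpow_neg_one, Equiv.Perm.mul_apply]
      exact s2 _ ih
  have hconj : ∀ (i : ℤ) x, f ((σ ^ i) x) = (σ ^ (-i)) (f x) := by
    have hc : hf.toPerm * σ * (hf.toPerm)⁻¹ = σ⁻¹ := by
      ext x
      simp [σ, hf x]
    intro i x
    have h1 : hf.toPerm * σ ^ i * (hf.toPerm)⁻¹ = σ ^ (-i) := by
      rw [← conj_zpow, hc, inv_zpow, zpow_neg]
    rw [← h1]
    simp [hf x]
  have hfw : ∀ m : ℤ, f w ≠ (σ ^ m) w := by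
    intro m hm
    obtain ⟨l, hl⟩ := Int.even_or_odd' m
    have h1 : f ((σ ^ l) w) = (σ ^ (m - l)) w := by
      rw [hconj, hm, ← Equiv.Perm.mul_apply, ← zpow_add]; congr 2; ring
    rcases hl with hl | hl
    · have : m - l = l := by omega
      rw [this] at h1
      exact (hfu _ (hmem l)).1.ne h1.symm
    · have : m - l = 1 + l := by omega
      rw [this, zpow_add, zpow_one, Equiv.Perm.mul_apply, hσ] at h1
      exact (hgv _ (hfu _ (hmem l)).2.1).1.ne h1
  let n := Function.minimalPeriod (σ • ·) w
  have hdvd : ∀ i : ℤ, (σ ^ i) w = w ↔ (n : ℤ) ∣ i := by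
    intro i
    have := MulAction.zpow_smul_eq_iff_minimalPeriod_dvd (a := σ) (b := w) (n := i)
    rwa [Equiv.Perm.smul_def] at this
  have hnpos : 0 < n := by
    rcases Nat.eq_zero_or_pos n with h0 | h0
    · exfalso
      have h1 : (σ ^ ((orderOf σ : ℕ) : ℤ)) w = w := by
        rw [zpow_natCast, pow_orderOf_eq_one]; rfl
      rw [hdvd, h0, Nat.cast_zero, zero_dvd_iff] at h1
      have := orderOf_pos σ
      omega
    · exact h0
  have hinj0 : ∀ i j : ℤ, (σ ^ i) w = (σ ^ j) w → ∃ k : ℤ, j = i + n * k := by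
    intro i j hij
    have : (σ ^ (j - i)) w = w := by
      rw [sub_eq_add_neg, add_comm, zpow_add, Equiv.Perm.mul_apply, ← hij,
        ← Equiv.Perm.mul_apply, ← zpow_add]
      simp
    obtain ⟨k, hk⟩ := (hdvd _).1 this
    exact ⟨k, by linarith⟩
  let c : ℤ → V := fun i => if Even i then (σ ^ (i / 2)) w else f ((σ ^ (i / 2)) w)
  have hc0 : ∀ i, Even i → c i = (σ ^ (i / 2)) w := fun i hi => if_pos hi
  have hc1 : ∀ i, ¬ Even i → c i = f ((σ ^ (i / 2)) w) := fun i hi => if_neg hi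
  have hcm : ∀ i, tgDeg G u (c i) ≠ 0 := by
    intro i
    by_cases hi : Even i
    · rw [hc0 i hi]; exact hmem _
    · rw [hc1 i hi]; exact (hfu _ (hmem _)).2.1
  have hcf : ∀ i, Even i → c (i + 1) = f (c i) := by
    intro i hi
    have : ¬ Even (i + 1) := by rw [Int.even_add_one]; simpa using hi
    rw [hc0 i hi, hc1 _ this]
    obtain ⟨k, rfl⟩ := hi
    congr 3
    omega
  have hcg : ∀ i, ¬ Even i → c (i + 1) = g (c i) := by
    intro i hi
    have : Even (i + 1) := by rw [Int.even_add_one]; exact hi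
    rw [hc1 i hi, hc0 _ this, ← hσ, ← Equiv.Perm.mul_apply]
    have h2 : (i + 1) / 2 = 1 + i / 2 := by
      rw [Int.not_even_iff] at hi
      omega
    rw [h2, zpow_add, zpow_one]
  have hper : ∀ i, c (i + 2 * n) = c i := by
    intro i
    have h2 : (i + 2 * n) / 2 = i / 2 + n := by omega
    have h3 : (σ ^ (i / 2 + (n : ℤ))) w = (σ ^ (i / 2)) w := by
      rw [zpow_add, Equiv.Perm.mul_apply, (hdvd n).2 dvd_rfl]
    have h4 : Even (i + 2 * n) ↔ Even i := by
      simp [Int.even_add]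
    simp only [c, h2, h3, h4]
  have hinj : ∀ i j, c i = c j → ∃ k : ℤ, j = i + 2 * n * k := by
    intro i j hij
    by_cases hi : Even i <;> by_cases hj : Even j
    · rw [hc0 i hi, hc0 j hj] at hij
      obtain ⟨k, hk⟩ := hinj0 _ _ hij
      refine ⟨k, ?_⟩
      rw [Int.even_iff] at hi hj
      have : j = 2 * (j / 2) := by omega
      have : i = 2 * (i / 2) := by omega
      linarith
    · exfalso
      rw [hc0 i hi, hc1 j hj, hconj] at hij
      apply hfw (j / 2 + i / 2)
      rw [zpow_add, Equiv.Perm.mul_apply, hij, ← Equiv.Perm.mul_apply, ← zpow_add]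
      simp
    · exfalso
      rw [hc1 i hi, hc0 j hj, hconj] at hij
      apply hfw (i / 2 + j / 2)
      rw [zpow_add, Equiv.Perm.mul_apply, ← hij, ← Equiv.Perm.mul_apply, ← zpow_add]
      simp
    · rw [hc1 i hi, hc1 j hj] at hij
      obtain ⟨k, hk⟩ := hinj0 _ _ (hf.injective hij)
      refine ⟨k, ?_⟩
      rw [Int.not_even_iff] at hi hj
      have : j = 2 * (j / 2) + 1 := by omega
      have : i = 2 * (i / 2) + 1 := by omega
      linarith
  have hadj : ∀ i, G.Adj (c i) (c (i + 1)) := by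
    intro i
    by_cases hi : Even i
    · rw [hcf i hi]; exact (hfu _ (hcm i)).1
    · rw [hcg i hi]; exact (hgv _ (hcm i)).1
  have hU : ∀ i, Even i → ∃ r, u = tgEd G (c i) (c (i + 1)) + r := by
    intro i hi
    rw [hcf i hi]; exact (hfu _ (hcm i)).2.2
  have hV : ∀ i, ¬ Even i → ∃ r, v = tgEd G (c i) (c (i + 1)) + r := by
    intro i hi
    rw [hcg i hi]; exact (hgv _ (hcm i)).2.2
  have hdS : ∀ s, tgDeg G (tgS G c s n) = tgT c 0 (2 * n) := by
    intro s
    rw [tgDeg_S c hadj, tgT_rot c (2 * n) (by simpa using hper)]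
  have hT1 : ∀ x, tgT c 0 (2 * n) x ≤ 1 := tgT_le_one c _ (by simpa using hinj) 0
  have hSu : tgS G c 0 n ≤ u := by
    apply tg_le_of _ (by rw [hdS]; exact hT1)
    intro e he
    obtain ⟨l, hl⟩ := tgS_support _ _ _ _ he
    obtain ⟨r, hr⟩ := hU (0 + 2 * l) (by simp)
    rw [hr, Finsupp.add_apply]
    omega
  have hSv : tgS G c 1 n ≤ v := by
    apply tg_le_of _ (by rw [hdS]; exact hT1)
    intro e he
    obtain ⟨l, hl⟩ := tgS_support _ _ _ _ he
    obtain ⟨r, hr⟩ := hV (1 + 2 * l) (by simp [Int.even_add])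
    rw [hr, Finsupp.add_apply]
    omega
  have hS0 : tgS G c 0 n ≠ 0 := by
    obtain ⟨m, hm⟩ : ∃ m, n = m + 1 := ⟨n - 1, by omega⟩
    rw [hm, tgS_succ]
    intro h
    exact tgEd_ne (hadj 0) (add_eq_zero.1 h).1
  have hfull : u = tgS G c 0 n := by
    by_contra hne
    refine hn (tgBal (p := tgS G c 0 n) (p' := u - tgS G c 0 n) (q := tgS G c 1 n)
      (q' := v - tgS G c 1 n) hd (add_tsub_cancel_of_le hSu).symm (add_tsub_cancel_of_le hSv).symm
      (by rw [hdS, hdS]) hS0 ?_)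
    intro h0
    have := add_tsub_cancel_of_le hSu
    rw [h0, add_zero] at this
    exact hne this.symm
  refine ⟨n, c, hnpos, hper, hadj, hU, hV, ?_, hinj⟩
  intro s
  rw [tgT_rot c (2 * n) (by simpa using hper)]
  conv_lhs => rw [hfull]
  exact hdS 0

open Classical in
noncomputable def tgM (u v : G.edgeSet →₀ ℕ) (i : ℤ) : G.edgeSet →₀ ℕ := if Even i then u else v

lemma tgM_congr (u v : G.edgeSet →₀ ℕ) {i j : ℤ} (h : (i - j) % 2 = 0) :
    tgM u v i = tgM u v j := by
  have : Even i ↔ Even j := by rw [Int.even_iff, Int.even_iff]; omega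
  simp only [tgM, this]

lemma tgM_not {u v : G.edgeSet →₀ ℕ} (hn : ¬ tgCn G u v) {i j : ℤ} (h : (i - j) % 2 = 1)
    {t s : G.edgeSet →₀ ℕ} (hts : tgCn G t s)
    (h1 : tgCn G t (tgM u v i)) (h2 : tgCn G s (tgM u v j)) : False := by
  have h3 : tgCn G (tgM u v i) (tgM u v j) := .trans _ _ _ (.symm _ _ h1) (.trans _ _ _ hts h2)
  apply hn
  unfold tgM at h3
  by_cases hi : Even i
  · have hj : ¬ Even j := by rw [Int.even_iff] at *; omega
    simpa [hi, hj] using h3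
  · have hj : Even j := by rw [Int.even_iff] at *; omega
    have h4 : tgCn G v u := by simpa [hi, hj] using h3
    exact .symm _ _ h4

lemma tgM_cn {u v : G.edgeSet →₀ ℕ} (hd : tgDeg G u = tgDeg G v) {n : ℕ} {c : ℤ → V}
    (C : tgCyc G u v n c) {t r : G.edgeSet →₀ ℕ} (ht : tgDeg G u = tgDeg G t) (i : ℤ)
    (h : t = tgEd G (c i) (c (i + 1)) + r) : tgCn G t (tgM u v i) := by
  unfold tgM
  by_cases hi : Even i
  · obtain ⟨r', hr'⟩ := C.hu i hi
    rw [if_pos hi]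
    exact .rel _ _ (tgSh_of ht.symm (tgEd_ne (C.adj i)) h hr')
  · obtain ⟨r', hr'⟩ := C.hv i hi
    rw [if_neg hi]
    exact .rel _ _ (tgSh_of (ht.symm.trans hd) (tgEd_ne (C.adj i)) h hr')

lemma tgM_cnS {u v : G.edgeSet →₀ ℕ} (hd : tgDeg G u = tgDeg G v) {n : ℕ} {c : ℤ → V}
    (C : tgCyc G u v n c) {t r : G.edgeSet →₀ ℕ} (ht : tgDeg G u = tgDeg G t) (i : ℤ) (a : ℕ)
    (ha : 0 < a) (h : t = tgS G c i a + r) : tgCn G t (tgM u v i) := by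
  obtain ⟨m, rfl⟩ : ∃ m, a = m + 1 := ⟨a - 1, by omega⟩
  rw [tgS_succ, add_assoc] at h
  exact tgM_cn hd C ht i h

lemma tgEven0 {u v : G.edgeSet →₀ ℕ} (hd : tgDeg G u = tgDeg G v) (hn : ¬ tgCn G u v) {n : ℕ}
    {c : ℤ → V} (C : tgCyc G u v n c) (i : ℤ) (a b : ℕ) (hab : n = a + b + 1) (ha : 0 < a)
    (hb : 0 < b) : ¬ G.Adj (c i) (c (i + 2 * a + 1)) := by
  intro h
  set j := i + 2 * a + 1 with hj
  have hdt : tgDeg G u = tgDeg G (tgEd G (c i) (c j) + tgS G c (i + 1) a + tgS G c (j + 1) b) := by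
    rw [C.deg i, map_add, map_add, tgDeg_ed h, tgDeg_S c C.adj, tgDeg_S c C.adj,
      show 2 * n = 1 + (2 * a + (1 + 2 * b)) by omega, tgT_add, tgT_add, tgT_add, tgT_one, tgT_one]
    rw [show i + ((1 : ℕ) : ℤ) + ((2 * a : ℕ) : ℤ) = j by push_cast; omega]
    push_cast
    abel
  refine tgM_not hn (i := i + 1) (j := j + 1) (by omega) (.refl _)
    (tgM_cnS hd C hdt (i + 1) a ha (r := tgEd G (c i) (c j) + tgS G c (j + 1) b) (by abel))
    (tgM_cnS hd C hdt (j + 1) b hb (r := tgEd G (c i) (c j) + tgS G c (i + 1) a) (by abel))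

lemma tgEven {u v : G.edgeSet →₀ ℕ} (hd : tgDeg G u = tgDeg G v) (hn : ¬ tgCn G u v) {n : ℕ}
    {c : ℤ → V} (C : tgCyc G u v n c) (i j : ℤ) (hp : (j - i) % 2 = 1) (h1 : i + 1 < j)
    (h2 : j + 1 < i + 2 * n) : ¬ G.Adj (c i) (c j) := by
  obtain ⟨a, ha⟩ : ∃ a : ℕ, j = i + 2 * a + 1 := ⟨((j - i) / 2).toNat, by omega⟩
  rw [ha]
  exact tgEven0 hd hn C i a (n - a - 1) (by omega) (by omega) (by omega)

lemma tgCross0 {u v : G.edgeSet →₀ ℕ} (hd : tgDeg G u = tgDeg G v) {n : ℕ}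
    {c : ℤ → V} (C : tgCyc G u v n c) (x z y w : ℤ) (h1 : x < z) (h2 : z < y) (h3 : y < w)
    (h4 : w < x + 2 * n) (p1 : (z - x) % 2 = 1) (p2 : (y - z) % 2 = 1) (p3 : (w - y) % 2 = 1)
    (a1 : G.Adj (c x) (c y)) (a2 : G.Adj (c z) (c w)) :
    ∃ t, tgDeg G u = tgDeg G t ∧ (∃ r, t = tgEd G (c x) (c y) + r) ∧
      (∃ r, t = tgEd G (c z) (c w) + r) ∧
      ((x + 1 < z ∨ y + 1 < w) → tgCn G t (tgM u v (x + 1))) ∧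
      ((z + 1 < y ∨ w + 1 < x + 2 * n) → tgCn G t (tgM u v x)) := by
  obtain ⟨a, ha⟩ : ∃ a : ℕ, z = x + 2 * a + 1 := ⟨((z - x) / 2).toNat, by omega⟩
  obtain ⟨b, hb⟩ : ∃ a : ℕ, y = z + 2 * a + 1 := ⟨((y - z) / 2).toNat, by omega⟩
  obtain ⟨d, hd'⟩ : ∃ a : ℕ, w = y + 2 * a + 1 := ⟨((w - y) / 2).toNat, by omega⟩
  obtain ⟨f, hf⟩ : ∃ a : ℕ, x + 2 * n = w + 2 * a + 1 := ⟨((x + 2 * n - w) / 2).toNat, by omega⟩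
  have hdt : tgDeg G u = tgDeg G (tgEd G (c x) (c y) + tgEd G (c z) (c w) + tgS G c (x + 1) a
      + tgS G c (z + 1) b + tgS G c (y + 1) d + tgS G c (w + 1) f) := by
    simp only [map_add]
    rw [C.deg x, tgDeg_ed a1, tgDeg_ed a2, tgDeg_S c C.adj, tgDeg_S c C.adj,
      tgDeg_S c C.adj, tgDeg_S c C.adj,
      show 2 * n = 1 + (2 * a + (1 + (2 * b + (1 + (2 * d + (1 + 2 * f)))))) by omega,
      tgT_add, tgT_add, tgT_add, tgT_add, tgT_add, tgT_add, tgT_add, tgT_one, tgT_one, tgT_one,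
      tgT_one]
    rw [show x + ((1 : ℕ) : ℤ) + ((2 * a : ℕ) : ℤ) = z by push_cast; omega]
    rw [show z + ((1 : ℕ) : ℤ) + ((2 * b : ℕ) : ℤ) = y by push_cast; omega]
    rw [show y + ((1 : ℕ) : ℤ) + ((2 * d : ℕ) : ℤ) = w by push_cast; omega]
    push_cast
    abel
  refine ⟨_, hdt, ⟨tgEd G (c z) (c w) + tgS G c (x + 1) a
      + tgS G c (z + 1) b + tgS G c (y + 1) d + tgS G c (w + 1) f, by abel⟩,
      ⟨tgEd G (c x) (c y) + tgS G c (x + 1) a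
      + tgS G c (z + 1) b + tgS G c (y + 1) d + tgS G c (w + 1) f, by abel⟩, ?_, ?_⟩
  · rintro (h | h)
    · exact tgM_cnS hd C hdt (x + 1) a (by omega) (r := tgEd G (c x) (c y) + tgEd G (c z) (c w)
        + tgS G c (z + 1) b + tgS G c (y + 1) d + tgS G c (w + 1) f) (by abel)
    · rw [tgM_congr u v (i := x + 1) (j := y + 1) (by omega)]
      exact tgM_cnS hd C hdt (y + 1) d (by omega) (r := tgEd G (c x) (c y) + tgEd G (c z) (c w)
        + tgS G c (x + 1) a + tgS G c (z + 1) b + tgS G c (w + 1) f) (by abel)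
  · rintro (h | h)
    · rw [tgM_congr u v (i := x) (j := z + 1) (by omega)]
      exact tgM_cnS hd C hdt (z + 1) b (by omega) (r := tgEd G (c x) (c y) + tgEd G (c z) (c w)
        + tgS G c (x + 1) a + tgS G c (y + 1) d + tgS G c (w + 1) f) (by abel)
    · rw [tgM_congr u v (i := x) (j := w + 1) (by omega)]
      exact tgM_cnS hd C hdt (w + 1) f (by omega) (r := tgEd G (c x) (c y) + tgEd G (c z) (c w)
        + tgS G c (x + 1) a + tgS G c (z + 1) b + tgS G c (y + 1) d) (by abel)

lemma tgCyc_ne {u v : G.edgeSet →₀ ℕ} {n : ℕ} {c : ℤ → V} (C : tgCyc G u v n c) {i j : ℤ}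
    (h1 : i < j) (h2 : j < i + 2 * n) : c i ≠ c j := by
  intro h
  obtain ⟨k, hk⟩ := C.inj i j h
  have h3 : 2 * (n : ℤ) * k < 2 * n * 1 := by linarith
  have h4 : 2 * (n : ℤ) * 0 < 2 * n * k := by linarith
  have hn : (0 : ℤ) < 2 * n := by linarith
  have := lt_of_mul_lt_mul_left h3 hn.le
  have := lt_of_mul_lt_mul_left h4 hn.le
  omega

/-- gap-freeness applied to two cycle edges -/
lemma tgG2 (hG : tgGap G) {u v : G.edgeSet →₀ ℕ} (hd : tgDeg G u = tgDeg G v)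
    (hn : ¬ tgCn G u v) {n : ℕ} {c : ℤ → V} (C : tgCyc G u v n c) (i j : ℤ)
    (hp : (j - i) % 2 = 1) (h1 : i + 1 < j) (h2 : j + 1 < i + 2 * n) :
    G.Adj (c i) (c (j + 1)) ∨ G.Adj (c (i + 1)) (c j) := by
  rcases hG _ _ _ _ (C.adj i) (C.adj j) (tgCyc_ne C (by omega) (by omega))
    (tgCyc_ne C (by omega) (by omega)) (tgCyc_ne C (by omega) (by omega))
    (tgCyc_ne C (by omega) (by omega)) with h | h | h | h
  · exact absurd h (tgEven hd hn C _ _ hp (by omega) (by omega))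
  · exact .inl h
  · exact .inr h
  · exact absurd h (tgEven hd hn C _ _ (by omega) (by omega) (by omega))

lemma tgSh_ed {t t' r r' : G.edgeSet →₀ ℕ} {x y : V} (h : G.Adj x y)
    (hd : tgDeg G t = tgDeg G t') (h1 : t = tgEd G x y + r) (h2 : t' = tgEd G x y + r') :
    tgCn G t t' := .rel _ _ (tgSh_of hd (tgEd_ne h) h1 h2)

lemma tgShift (hG : tgGap G) {u v : G.edgeSet →₀ ℕ} (hd : tgDeg G u = tgDeg G v)
    (hn : ¬ tgCn G u v) {n : ℕ} {c : ℤ → V} (C : tgCyc G u v n c) (p q : ℤ)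
    (hp : (q - p) % 2 = 0) (h1 : p + 4 ≤ q) (h2 : q < p + 2 * n)
    (a1 : G.Adj (c p) (c q)) (a2 : G.Adj (c (p + 1)) (c (q + 1))) : False := by
  obtain ⟨t, ht, ⟨r1, hr1⟩, ⟨r2, hr2⟩, _, hc⟩ := tgCross0 hd C p (p + 1) q (q + 1) (by omega)
    (by omega) (by omega) (by omega) (by omega) (by omega) (by omega) a1 a2
  have hc := hc (by omega)
  rcases tgG2 hG hd hn C (p + 2) (q + 1) (by omega) (by omega) (by omega) with h | h
  · obtain ⟨s, hs, ⟨r3, hr3⟩, ⟨r4, hr4⟩, _, hc'⟩ := tgCross0 hd C (p + 1) (p + 2) (q + 1)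
      (q + 1 + 1) (by omega)
      (by omega) (by omega) (by omega) (by omega) (by omega) (by omega) a2 h
    have hc' := hc' (by omega)
    exact tgM_not hn (i := p) (j := p + 1) (by omega) (tgSh_ed a2 (ht.symm.trans hs) hr2 hr3) hc hc'
  · obtain ⟨s, hs, ⟨r3, hr3⟩, ⟨r4, hr4⟩, hc', _⟩ := tgCross0 hd C p (p + 2 + 1) q
      (q + 1) (by omega)
      (by omega) (by omega) (by omega) (by omega) (by omega) (by omega) a1 h
    have hc' := hc' (by omega)
    exact tgM_not hn (i := p) (j := p + 1) (by omega) (tgSh_ed a1 (ht.symm.trans hs) hr1 hr3) hc hc'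

lemma tgCross (hG : tgGap G) {u v : G.edgeSet →₀ ℕ} (hd : tgDeg G u = tgDeg G v)
    (hn : ¬ tgCn G u v) {n : ℕ} {c : ℤ → V} (C : tgCyc G u v n c) (h3n : 3 ≤ n) (x z y w : ℤ)
    (h1 : x < z) (h2 : z < y) (h3 : y < w)
    (h4 : w < x + 2 * n) (p1 : (z - x) % 2 = 1) (p2 : (y - z) % 2 = 1) (p3 : (w - y) % 2 = 1)
    (a1 : G.Adj (c x) (c y)) (a2 : G.Adj (c z) (c w)) : False := by
  have shift : ∀ p q : ℤ, (q - p) % 2 = 0 → p + 2 ≤ q → q + 2 ≤ p + 2 * n →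
      G.Adj (c p) (c q) → G.Adj (c (p + 1)) (c (q + 1)) → False := by
    intro p q e1 e2 e3 b1 b2
    by_cases h : p + 4 ≤ q
    · exact tgShift hG hd hn C p q e1 h (by omega) b1 b2
    · refine tgShift hG hd hn C q (p + 2 * n) (by omega) (by omega) (by omega) ?_ ?_
      · rw [C.per]; exact b1.symm
      · rw [show p + 2 * n + 1 = (p + 1) + 2 * n by ring, C.per]; exact b2.symm
  obtain ⟨t, ht, _, _, hc1, hc2⟩ := tgCross0 hd C x z y w h1 h2 h3 h4 p1 p2 p3 a1 a2
  by_cases k1 : x + 1 < z ∨ y + 1 < w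
  · by_cases k2 : z + 1 < y ∨ w + 1 < x + 2 * n
    · exact tgM_not hn (i := x + 1) (j := x) (by omega) (.refl _) (hc1 k1) (hc2 k2)
    · have e1 : y = z + 1 := by omega
      have e2 : x + 2 * n = w + 1 := by omega
      refine shift z w (by omega) (by omega) (by omega) a2 ?_
      rw [← e1, ← e2, C.per]
      exact a1.symm
  · have e1 : z = x + 1 := by omega
    have e2 : w = y + 1 := by omega
    rw [e1, e2] at a2
    exact shift x y (by omega) (by omega) (by omega) a1 a2

lemma tgNest (hG : tgGap G) {u v : G.edgeSet →₀ ℕ} (hd : tgDeg G u = tgDeg G v)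
    (hn : ¬ tgCn G u v) {n : ℕ} {c : ℤ → V} (C : tgCyc G u v n c) (h3n : 3 ≤ n) (x z w y : ℤ)
    (h1 : x < z) (h2 : z < w) (h3 : w < y)
    (h4 : y < x + 2 * n) (p1 : (z - x) % 2 = 1) (p2 : (w - z) % 2 = 0) (p3 : (y - w) % 2 = 1)
    (a1 : G.Adj (c x) (c y)) (a2 : G.Adj (c z) (c w)) : False := by
  rcases tgG2 hG hd hn C z y (by omega) (by omega) (by omega) with h | h
  · exact tgCross hG hd hn C h3n x z y (y + 1) (by omega) (by omega) (by omega) (by omega) (by omega)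
      (by omega) (by omega) a1 h
  · exact tgCross hG hd hn C h3n z (z + 1) w y (by omega) (by omega) (by omega) (by omega) (by omega)
      (by omega) (by omega) a2 h

lemma tgCyc_perk {u v : G.edgeSet →₀ ℕ} {n : ℕ} {c : ℤ → V} (C : tgCyc G u v n c) (i k : ℤ) :
    c (i + 2 * n * k) = c i := by
  have : Function.Periodic c (2 * n) := C.per
  have := this.int_mul k i
  rwa [mul_comm] at this

/-- reduce an index into a window -/
lemma tgCyc_window {u v : G.edgeSet →₀ ℕ} {n : ℕ} {c : ℤ → V} (C : tgCyc G u v n c) (s i : ℤ) :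
    ∃ j, s ≤ j ∧ j < s + 2 * n ∧ c j = c i ∧ (j - i) % 2 = 0 := by
  have hn : (0 : ℤ) < 2 * n := by have := C.pos; omega
  refine ⟨s + (i - s) % (2 * n), ?_, ?_, ?_, ?_⟩
  · have := Int.emod_nonneg (i - s) hn.ne'; omega
  · have := Int.emod_lt_of_pos (i - s) hn; omega
  · have h1 := Int.emod_add_mul_ediv (i - s) (2 * n)
    have h2 := tgCyc_perk C (s + (i - s) % (2 * n)) ((i - s) / (2 * n))
    rw [← h2]
    congr 1
    linarith
  · have h1 := Int.emod_add_mul_ediv (i - s) (2 * n)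
    have : s + (i - s) % (2 * n) - i = 2 * (-(n * ((i - s) / (2 * n)))) := by linarith
    rw [this]
    simp

lemma tgNoMix (hG : tgGap G) {u v : G.edgeSet →₀ ℕ} (hd : tgDeg G u = tgDeg G v)
    (hn : ¬ tgCn G u v) {n : ℕ} {c : ℤ → V} (C : tgCyc G u v n c) (h3n : 3 ≤ n) (i j k l : ℤ)
    (hij : (j - i) % 2 = 0) (hkl : (l - k) % 2 = 0) (hik : (k - i) % 2 = 1)
    (a1 : G.Adj (c i) (c j)) (a2 : G.Adj (c k) (c l)) : False := by
  obtain ⟨j', s1, s2, s3, s4⟩ := tgCyc_window C i j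
  rw [← s3] at a1
  have hij' : i ≠ j' := by rintro rfl; exact a1.ne rfl
  have main : ∀ k l : ℤ, i ≤ k → k < l → l < i + 2 * n → (k - i) % 2 = 1 → (l - k) % 2 = 0 →
      G.Adj (c k) (c l) → False := by
    intro k l b1 b2 b3 b4 b5 a2
    by_cases h1 : l < j'
    · exact tgNest hG hd hn C h3n i k l j' (by omega) (by omega) (by omega) (by omega) (by omega)
        (by omega) (by omega) a1 a2
    · by_cases h2 : k < j'
      · exact tgCross hG hd hn C h3n i k j' l (by omega) (by omega) (by omega) (by omega) (by omega)
          (by omega) (by omega) a1 a2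
      · refine tgNest hG hd hn C h3n j' k l (i + 2 * n) (by omega) (by omega) (by omega) (by omega)
          (by omega) (by omega) (by omega) ?_ a2
        rw [C.per]; exact a1.symm
  obtain ⟨k', k1, k2, k3, k4⟩ := tgCyc_window C i k
  obtain ⟨l', l1, l2, l3, l4⟩ := tgCyc_window C i l
  rw [← k3, ← l3] at a2
  rcases lt_trichotomy k' l' with h | h | h
  · exact main k' l' k1 h l2 (by omega) (by omega) a2
  · rw [h] at a2; exact a2.ne rfl
  · exact main l' k' l1 h k2 (by omega) (by omega) a2.symm

lemma tgDeg_degree (u : G.edgeSet →₀ ℕ) : (tgDeg G u).degree = 2 * u.degree := by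
  classical
  induction u using Finsupp.induction_linear with
  | zero => simp
  | add f g hf hg => rw [map_add, map_add, map_add, hf, hg]; ring
  | single e k =>
    obtain ⟨e, he⟩ := e
    induction e using Sym2.ind with
    | _ x y => simp [tgDeg, tgEps]; ring

lemma tgT_degree (c : ℤ → V) (s : ℤ) (m : ℕ) : (tgT c s m).degree = m := by
  simp [tgT]

lemma tgT_mem (c : ℤ → V) (s : ℤ) (m : ℕ) {x : V} (h : tgT c s m x ≠ 0) : ∃ i, c i = x := by
  classical
  unfold tgT at h
  rw [Finsupp.finsetSum_apply] at h
  obtain ⟨l, _, hl⟩ := Finset.exists_ne_zero_of_sum_ne_zero h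
  refine ⟨s + l, ?_⟩
  by_contra hc
  simp [Finsupp.single_apply, hc] at hl

/-- in squarefree degree with at least three edges, a disconnected fiber has two elements -/
lemma tgTwo [Finite V] (hG : tgGap G) {u v : G.edgeSet →₀ ℕ} (hd : tgDeg G u = tgDeg G v)
    (hsq : ∀ x, tgDeg G u x ≤ 1) (h3 : 3 ≤ u.degree) (hn : ¬ tgCn G u v)
    (t : G.edgeSet →₀ ℕ) (ht : tgDeg G u = tgDeg G t) : t = u ∨ t = v := by
  classical
  obtain ⟨n, c, C⟩ := tgCycle hd hsq hn
  have h3n : 3 ≤ n := by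
    have h1 := tgDeg_degree u
    rw [C.deg 0, tgT_degree] at h1
    omega
  have hpar : ∃ r : ℤ, ∀ i j, (i - r) % 2 = 0 → (j - r) % 2 = 0 → ¬ G.Adj (c i) (c j) := by
    by_cases h : ∃ i j : ℤ, (i - 0) % 2 = 0 ∧ (j - 0) % 2 = 0 ∧ G.Adj (c i) (c j)
    · obtain ⟨i, j, h1, h2, h3⟩ := h
      refine ⟨1, fun k l h4 h5 h6 => ?_⟩
      exact tgNoMix hG hd hn C h3n i j k l (by omega) (by omega) (by omega) h3 h6
    · push Not at h
      exact ⟨0, h⟩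
  obtain ⟨r, hr⟩ := hpar
  let χ : V → ℤ := fun x => if ∃ i, (i - r) % 2 = 0 ∧ c i = x then -1 else 1
  have hpe : ∀ i j, c i = c j → (i - j) % 2 = 0 := by
    intro i j h
    obtain ⟨k, hk⟩ := C.inj i j h
    have : i - j = 2 * (-(n * k)) := by linarith
    rw [this]; simp
  have hχ0 : ∀ i, (i - r) % 2 = 0 → χ (c i) = -1 := by
    intro i hi
    exact if_pos ⟨i, hi, rfl⟩
  have hχ1 : ∀ i, (i - r) % 2 = 1 → χ (c i) = 1 := by
    intro i hi
    apply if_neg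
    rintro ⟨j, h1, h2⟩
    have := hpe _ _ h2
    omega
  let L : (V →₀ ℕ) →ₗ[ℕ] ℤ := Finsupp.linearCombination ℕ χ
  have hL1 : ∀ x, L (Finsupp.single x 1) = χ x := by intro x; simp [L]
  have hLT : ∀ s m, L (tgT c s (2 * m)) = 0 := by
    intro s m
    induction m with
    | zero => simp [tgT]
    | succ m ih =>
      rw [show 2 * (m + 1) = 2 * m + (1 + 1) by ring, tgT_add, tgT_add, tgT_one, tgT_one, map_add,
        map_add, ih, hL1, hL1]
      rcases Int.emod_two_eq_zero_or_one (s + ((2 * m : ℕ) : ℤ) - r) with h | h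
      · rw [hχ0 _ h, hχ1 _ (by push_cast at h ⊢; omega)]; rfl
      · rw [hχ1 _ h, hχ0 _ (by push_cast at h ⊢; omega)]; rfl
  have hmem : ∀ x, tgDeg G u x ≠ 0 → ∃ i, c i = x := by
    intro x hx
    rw [C.deg 0] at hx
    exact tgT_mem _ _ _ hx
  have hLed : ∀ i j, G.Adj (c i) (c j) → 0 ≤ L (tgDeg G (tgEd G (c i) (c j))) := by
    intro i j h
    rw [tgDeg_ed h, map_add, hL1, hL1]
    rcases Int.emod_two_eq_zero_or_one (i - r) with h1 | h1 <;>
      rcases Int.emod_two_eq_zero_or_one (j - r) with h2 | h2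
    · exact absurd h (hr i j h1 h2)
    · rw [hχ0 i h1, hχ1 j h2]; norm_num
    · rw [hχ1 i h1, hχ0 j h2]; norm_num
    · rw [hχ1 i h1, hχ1 j h2]; norm_num
  have hLpos : ∀ (m : ℕ) (p : G.edgeSet →₀ ℕ), p.degree = m →
      (∀ x, tgDeg G p x ≠ 0 → ∃ i, c i = x) → 0 ≤ L (tgDeg G p) := by
    intro m
    induction m with
    | zero =>
      intro p hp _
      rw [Finsupp.degree_eq_zero_iff] at hp
      simp [hp]
    | succ m ih =>
      intro p hp hx
      have hp0 : p ≠ 0 := by rintro rfl; simp at hp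
      obtain ⟨x, y, p', hxy, rfl⟩ := tgExists hp0
      obtain ⟨i, rfl⟩ := hx x (by rw [map_add, tgDeg_ed hxy]; simp)
      obtain ⟨j, rfl⟩ := hx y (by rw [map_add, tgDeg_ed hxy]; simp)
      rw [map_add, map_add]
      have e1 : (tgEd G (c i) (c j)).degree = 1 := by simp [tgEd, hxy]
      rw [map_add, e1] at hp
      refine add_nonneg (hLed i j hxy) (ih p' (by omega) ?_)
      intro z hz
      apply hx z
      rw [map_add, Finsupp.add_apply]
      omega
  have hcyc : ∀ x y q, G.Adj x y → t = tgEd G x y + q →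
      ∃ i, tgEd G x y = tgEd G (c i) (c (i + 1)) := by
    intro x y q hxy hq
    have hx : ∀ z, tgDeg G t z ≠ 0 → ∃ i, c i = z := by rw [← ht]; exact hmem
    rw [hq] at hx
    obtain ⟨i, rfl⟩ := hx x (by rw [map_add, tgDeg_ed hxy]; simp)
    obtain ⟨j, rfl⟩ := hx y (by rw [map_add, tgDeg_ed hxy]; simp)
    have g1 : 0 ≤ L (tgDeg G q) := by
      apply hLpos _ q rfl
      intro z hz
      apply hx z
      rw [map_add, Finsupp.add_apply]
      omega
    have g2 : L (tgDeg G (tgEd G (c i) (c j))) + L (tgDeg G q) = 0 := by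
      rw [← map_add, ← map_add, ← hq, ← ht, C.deg 0, hLT]
    have g3 : (j - i) % 2 = 1 := by
      by_contra hc
      rw [tgDeg_ed hxy, map_add, hL1, hL1] at g2
      rcases Int.emod_two_eq_zero_or_one (i - r) with h1 | h1
      · exact hr i j h1 (by omega) hxy
      · rw [hχ1 i h1, hχ1 j (by omega)] at g2
        omega
    obtain ⟨j', s1, s2, s3, s4⟩ := tgCyc_window C i j
    rw [← s3] at hxy ⊢
    by_cases k1 : j' = i + 1
    · exact ⟨i, by rw [k1]⟩
    · have k2 : j' + 1 = i + 2 * n := by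
        by_contra k2
        exact tgEven hd hn C i j' (by omega) (by omega) (by omega) hxy
      exact ⟨j', by rw [k2, C.per, tgEd_comm]⟩
  have hside : ∀ (m : G.edgeSet →₀ ℕ), tgDeg G u = tgDeg G m → t ≠ m →
      ∃ i q, t = tgEd G (c i) (c (i + 1)) + q ∧ ¬ ∃ q', m = tgEd G (c i) (c (i + 1)) + q' := by
    intro m hm hne
    have : ∃ e, t e ≠ 0 ∧ m e = 0 := by
      by_contra hc
      push Not at hc
      exact hne (tg_eq_of_le (tg_le_of hc (by rw [← ht]; exact hsq)) (ht.symm.trans hm))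
    obtain ⟨⟨e, he⟩, h1, h2⟩ := this
    induction e using Sym2.ind with
    | _ x y =>
      obtain ⟨i, hi⟩ := hcyc x y _ he (tgEd_split he h1)
      refine ⟨i, t - tgEd G x y, by rw [← hi]; exact tgEd_split he h1, ?_⟩
      rintro ⟨q', hq'⟩
      rw [← hi] at hq'
      rw [hq', Finsupp.add_apply, tgEd_apply he] at h2
      omega
  by_contra hc
  push Not at hc
  obtain ⟨i, q, h1, h2⟩ := hside u rfl hc.1
  obtain ⟨j, q', h1', h2'⟩ := hside v hd hc.2
  have hi : ¬ Even i := fun h => h2 (C.hu i h)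
  have hj : Even j := by by_contra h; exact h2' (C.hv j h)
  rw [Int.not_even_iff] at hi
  rw [Int.even_iff] at hj
  exact tgM_not hn (i := i) (j := j) (by omega) (.refl _) (tgM_cn hd C ht i h1)
    (tgM_cn hd C ht j h1')


/-! ### Fibers -/

noncomputable def tgInd (W : Finset V) : V →₀ ℕ := Finsupp.indicator W (fun _ _ => 1)

def tgF (G : SimpleGraph V) (W : Finset V) : Set (G.edgeSet →₀ ℕ) := {u | tgDeg G u = tgInd W}

def tgBad (G : SimpleGraph V) (W : Finset V) : Prop :=
  (∃ u ∈ tgF G W, ∃ v ∈ tgF G W, u ≠ v) ∧ ∀ u ∈ tgF G W, ∀ v, tgSh G u v → v = u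

lemma tgInd_le (W : Finset V) (x : V) : tgInd W x ≤ 1 := by
  classical
  rw [tgInd, Finsupp.indicator_apply]; split_ifs <;> simp

lemma tgInd_support (W : Finset V) : (tgInd W).support = W := by
  classical
  ext x
  rw [Finsupp.mem_support_iff, tgInd, Finsupp.indicator_apply]; split_ifs <;> simp_all

lemma tgInd_of {b : V →₀ ℕ} (h : ∀ x, b x ≤ 1) : tgInd b.support = b := by
  classical
  ext x
  rw [tgInd, Finsupp.indicator_apply]
  have := h x
  split_ifs with h1
  · rw [Finsupp.mem_support_iff] at h1; omega
  · rw [Finsupp.notMem_support_iff] at h1; omega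

lemma tgInd_degree (W : Finset V) : (tgInd W).degree = W.card := by
  classical
  rw [Finsupp.degree_apply, tgInd_support, Finset.card_eq_sum_ones]
  apply Finset.sum_congr rfl
  intro x hx
  rw [tgInd, Finsupp.indicator_apply]; simp [hx]

lemma tg_apply_le_one {u : G.edgeSet →₀ ℕ} (h : ∀ x, tgDeg G u x ≤ 1) (e : G.edgeSet) :
    u e ≤ 1 := by
  obtain ⟨e, he⟩ := e
  induction e using Sym2.ind with
  | _ x y => exact (tg_apply_le_deg u he).trans (h x)

lemma tgSq_ext {u v : G.edgeSet →₀ ℕ} (h1 : ∀ x, tgDeg G u x ≤ 1) (h2 : ∀ x, tgDeg G v x ≤ 1)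
    (h : u.support = v.support) : u = v := by
  ext e
  have a := tg_apply_le_one h1 e
  have b := tg_apply_le_one h2 e
  have c : e ∈ u.support ↔ e ∈ v.support := by rw [h]
  rw [Finsupp.mem_support_iff, Finsupp.mem_support_iff] at c
  omega

lemma tgF_sq {W : Finset V} {u : G.edgeSet →₀ ℕ} (h : u ∈ tgF G W) (x : V) : tgDeg G u x ≤ 1 := by
  rw [show tgDeg G u = tgInd W from h]; exact tgInd_le W x

lemma tgF_finite [Finite V] (W : Finset V) : (tgF G W).Finite := by
  apply Set.Finite.of_injOn (f := fun u : G.edgeSet →₀ ℕ => u.support) (t := Set.univ)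
    (fun _ _ => Set.mem_univ _) _ Set.finite_univ
  intro u hu v hv huv
  exact tgSq_ext (tgF_sq hu) (tgF_sq hv) huv

lemma tg_degree_eq {u v : G.edgeSet →₀ ℕ} (h : tgDeg G u = tgDeg G v) : u.degree = v.degree := by
  have a := tgDeg_degree u
  have b := tgDeg_degree v
  rw [h] at a; omega

lemma tgEd_degree {x y : V} (h : G.Adj x y) : (tgEd G x y).degree = 1 := by
  simp [tgEd, h]

lemma tg_deg1 {u v : G.edgeSet →₀ ℕ} (h : tgDeg G u = tgDeg G v) (h1 : u.degree ≤ 1) : v = u := by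
  have h2 := tg_degree_eq h
  by_cases hu : u = 0
  · subst hu
    simp only [map_zero] at h2
    exact (Finsupp.degree_eq_zero_iff _).1 h2.symm
  · obtain ⟨x, y, u', hxy, rfl⟩ := tgExists hu
    rw [map_add, tgEd_degree hxy] at h1 h2
    have hu' : u' = 0 := (Finsupp.degree_eq_zero_iff _).1 (by omega)
    subst hu'
    have hx : tgDeg G v x ≠ 0 := by
      rw [← h, add_zero, tgDeg_ed hxy]; simp
    obtain ⟨z, v', hxz, rfl⟩ := tgDeg_pos hx
    rw [map_add, tgEd_degree hxz] at h2
    have hv' : v' = 0 := (Finsupp.degree_eq_zero_iff _).1 (by simp at h2; omega)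
    subst hv'
    rw [add_zero, add_zero, tgDeg_ed hxy, tgDeg_ed hxz] at h
    have h5 := add_left_cancel h
    have : y = z := by
      rw [Finsupp.single_left_inj (by norm_num)] at h5; exact h5
    rw [this]

lemma tgSh_split {u v : G.edgeSet →₀ ℕ} (h : tgSh G u v) : ∃ x y u' v', G.Adj x y ∧
    u = tgEd G x y + u' ∧ v = tgEd G x y + v' ∧ tgDeg G u' = tgDeg G v' ∧
    u.degree = u'.degree + 1 := by
  obtain ⟨hd, ⟨e, he⟩, h1, h2⟩ := h
  induction e using Sym2.ind with
  | _ x y =>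
    have a := tgEd_split he h1
    have b := tgEd_split he h2
    refine ⟨x, y, _, _, he, a, b, ?_, ?_⟩
    · rw [a, b, map_add, map_add] at hd
      exact add_left_cancel hd
    · conv_lhs => rw [a]
      rw [map_add, tgEd_degree he]; omega

lemma tg_deg2 {u v : G.edgeSet →₀ ℕ} (h : tgSh G u v) (h1 : u.degree ≤ 2) : v = u := by
  obtain ⟨x, y, u', v', _, rfl, rfl, hd, hdg⟩ := tgSh_split h
  rw [tg_deg1 hd (by omega)]

lemma tgCn_iso {u v : G.edgeSet →₀ ℕ} (h : ∀ t, tgSh G u t → t = u) (hc : tgCn G u v) : v = u := by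
  have key : ∀ t s, tgCn G t s → (t = u ↔ s = u) := by
    intro t s hts
    induction hts with
    | rel t s hr =>
      constructor
      · rintro rfl; exact h _ hr
      · rintro rfl; exact h _ ⟨hr.1.symm, hr.2.imp fun _ k => ⟨k.2, k.1⟩⟩
    | refl => rfl
    | symm _ _ _ ih => exact ih.symm
    | trans _ _ _ _ _ ih1 ih2 => exact ih1.trans ih2
  exact (key u v hc).1 rfl

lemma tgCn_deg {u v : G.edgeSet →₀ ℕ} (hc : tgCn G u v) : tgDeg G u = tgDeg G v := by
  induction hc with
  | rel _ _ h => exact h.1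
  | refl => rfl
  | symm _ _ _ ih => exact ih.symm
  | trans _ _ _ _ _ ih1 ih2 => exact ih1.trans ih2

lemma tgBad_of [Finite V] (hG : tgGap G) {u v : G.edgeSet →₀ ℕ} (hd : tgDeg G u = tgDeg G v)
    (hn : ¬ tgCn G u v) : u ∈ tgF G (tgDeg G u).support ∧ v ∈ tgF G (tgDeg G u).support ∧
      tgBad G (tgDeg G u).support := by
  have hsq : ∀ x, tgDeg G u x ≤ 1 := by
    intro x
    by_contra hc
    exact hn (tgNonsq hG hd (w := x) (by omega))
  have hne : u ≠ v := by rintro rfl; exact hn (.refl _)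
  have hu : u ∈ tgF G (tgDeg G u).support := (tgInd_of hsq).symm
  have hv : v ∈ tgF G (tgDeg G u).support := hd.symm.trans (tgInd_of hsq).symm
  refine ⟨hu, hv, ⟨u, hu, v, hv, hne⟩, ?_⟩
  intro t ht s hts
  by_cases h3 : u.degree ≤ 2
  · apply tg_deg2 hts
    rw [tg_degree_eq (show tgDeg G t = tgDeg G u from ht.trans hu.symm)]
    exact h3
  · have hut : tgDeg G u = tgDeg G t := hu.trans ht.symm
    have h1 := tgTwo hG hd hsq (by omega) hn t hut
    have h2 := tgTwo hG hd hsq (by omega) hn s (hut.trans hts.1)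
    rcases h1 with rfl | rfl <;> rcases h2 with rfl | rfl
    · rfl
    · exact absurd (.rel _ _ hts) hn
    · exact absurd (.symm _ _ (.rel _ _ hts)) hn
    · rfl

lemma tgBad_card [Finite V] (hG : tgGap G) {W : Finset V} (hb : tgBad G W) :
    (tgF G W).ncard ≤ 3 := by
  classical
  obtain ⟨⟨u, hu, v, hv, hne⟩, hiso⟩ := hb
  have huv : tgDeg G u = tgDeg G v := hu.trans hv.symm
  have hn : ¬ tgCn G u v := fun hc => hne (tgCn_iso (hiso u hu) hc).symm
  by_cases h3 : 3 ≤ u.degree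
  · have : tgF G W ⊆ {u, v} := by
      intro t ht
      exact tgTwo hG huv (tgF_sq hu) h3 hn t (hu.trans ht.symm)
    exact (Set.ncard_le_ncard this (by simp)).trans ((Set.ncard_pair hne).le.trans (by norm_num))
  · have hW : W.card ≤ 4 := by
      rw [← tgInd_degree, ← show tgDeg G u = tgInd W from hu, tgDeg_degree]; omega
    have hu0 : u ≠ 0 := by
      rintro rfl
      exact hne (tg_deg1 huv (by simp)).symm
    obtain ⟨a, y, u', hay, hu'⟩ := tgExists hu0
    have ha : ∀ t ∈ tgF G W, tgDeg G t a ≠ 0 := by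
      intro t ht
      rw [show tgDeg G t = tgDeg G u from ht.trans hu.symm, hu', map_add, tgDeg_ed hay]
      simp
    have haW : a ∈ W := by
      rw [← tgInd_support W, Finsupp.mem_support_iff, ← show tgDeg G u = tgInd W from hu]
      exact ha u hu
    have : Nonempty V := ⟨a⟩
    choose! f f' hf using fun t (ht : t ∈ tgF G W) => tgDeg_pos (ha t ht)
    have hmap : Set.MapsTo f (tgF G W) ((W.erase a : Finset V) : Set V) := by
      intro t ht
      obtain ⟨h1, h2⟩ := hf t ht
      rw [Finset.mem_coe, Finset.mem_erase]
      refine ⟨h1.ne', ?_⟩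
      rw [← tgInd_support W, Finsupp.mem_support_iff, ← show tgDeg G t = tgInd W from ht]
      intro h0
      have h6 := DFunLike.congr_fun (congrArg (tgDeg G) h2) (f t)
      rw [h0, map_add, tgDeg_ed h1] at h6
      simp at h6
      omega
    have hinj : Set.InjOn f (tgF G W) := by
      intro t ht s hs hts
      obtain ⟨h1, h2⟩ := hf t ht
      obtain ⟨h3, h4⟩ := hf s hs
      rw [← hts] at h4
      exact (hiso t ht s (tgSh_of (ht.trans hs.symm) (tgEd_ne h1) h2 h4)).symm
    have h5 := Set.ncard_le_ncard_of_injOn f hmap hinj (Finset.finite_toSet _)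
    rw [Set.ncard_coe_finset, Finset.card_erase_of_mem haW] at h5
    omega

lemma tgC (hG : tgGap G) {m : G.edgeSet →₀ ℕ} (hsq : ∀ x, tgDeg G m x ≤ 1)
    (hm : ∀ t, tgSh G m t → t = m) : ∀ (n : ℕ) (u v : G.edgeSet →₀ ℕ), u.degree = n →
      (∀ e, u e ≠ 0 → m e ≠ 0) → (∃ e, m e ≠ 0 ∧ u e = 0) → tgDeg G u = tgDeg G v → v = u := by
  intro n
  induction n using Nat.strong_induction_on with
  | _ n ih =>
    intro u v hn hs ⟨e0, he0, hue0⟩ hd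
    have hiso : ∀ t, tgSh G u t → t = u := by
      intro t ht
      obtain ⟨x, y, u', v', hxy, rfl, rfl, hd', hdg⟩ := tgSh_split ht
      rw [ih u'.degree (by omega) u' v' rfl _ _ hd']
      · intro e he
        apply hs e
        simp [he]
      · refine ⟨e0, he0, ?_⟩
        simp at hue0
        exact hue0.2
    by_cases hq : ∀ x, tgDeg G u x ≤ 1
    · have hle : u ≤ m := tg_le_of hs hq
      obtain ⟨r, rfl⟩ := exists_add_of_le hle
      have h1 : tgSh G (u + r) (v + r) := by
        refine ⟨by rw [map_add, map_add, hd], e0, he0, ?_⟩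
        simp [hue0] at he0
        simp [he0]
      have := hm _ h1
      exact add_right_cancel this
    · push Not at hq
      obtain ⟨x, hx⟩ := hq
      exact tgCn_iso hiso (tgNonsq hG hd (w := x) (by omega))

lemma tg_supp {u m : G.edgeSet →₀ ℕ} (h : u.support = m.support) :
    (tgDeg G u).support = (tgDeg G m).support := by
  have key : ∀ {u m : G.edgeSet →₀ ℕ}, u.support = m.support → ∀ x, tgDeg G u x ≠ 0 →
      tgDeg G m x ≠ 0 := by
    intro u m h x hx
    obtain ⟨y, u', hxy, rfl⟩ := tgDeg_pos hx
    have h1 : (⟨s(x, y), hxy⟩ : G.edgeSet) ∈ (tgEd G x y + u').support := by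
      rw [Finsupp.mem_support_iff, Finsupp.add_apply, tgEd_apply hxy]; omega
    rw [h, Finsupp.mem_support_iff] at h1
    have := tg_apply_le_deg m hxy
    omega
  ext x
  rw [Finsupp.mem_support_iff, Finsupp.mem_support_iff]
  exact ⟨key h x, key h.symm x⟩

/-! ### Algebra -/

lemma tgHom_mon (K : Type*) [Field K] (u : G.edgeSet →₀ ℕ) :
    graphHom K G (monomial u 1) = monomial (tgDeg G u) 1 := by
  classical
  induction u using Finsupp.induction_linear with
  | zero => simp
  | add f g hf hg =>
    rw [map_add, show (monomial (f + g) (1 : K)) = monomial f 1 * monomial g 1 by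
      rw [monomial_mul, one_mul], map_mul, hf, hg, monomial_mul, one_mul]
  | single e n =>
    rw [graphHom, aeval_monomial, map_one, one_mul, Finsupp.prod_single_index (by simp)]
    obtain ⟨e, he⟩ := e
    induction e using Sym2.ind with
    | _ x y =>
      simp [tgDeg, tgEps, X, monomial_pow, monomial_mul]

lemma tgMemI (K : Type*) [Field K] (u v : G.edgeSet →₀ ℕ) :
    (monomial u 1 - monomial v 1 : MvPolynomial G.edgeSet K) ∈ toricIdealGraph K G ↔
      tgDeg G u = tgDeg G v := by
  classical
  rw [toricIdealGraph, RingHom.mem_ker]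
  change graphHom K G _ = 0 ↔ _
  rw [map_sub, tgHom_mon, tgHom_mon, sub_eq_zero]
  exact (monomial_left_injective (one_ne_zero)).eq_iff

lemma tg_span (K : Type*) [Field K] (J : Ideal (MvPolynomial G.edgeSet K))
    (hJ : ∀ u v, tgDeg G u = tgDeg G v →
      (monomial u 1 - monomial v 1 : MvPolynomial G.edgeSet K) ∈ J) :
    toricIdealGraph K G ≤ J := by
  classical
  let r : (V →₀ ℕ) → (G.edgeSet →₀ ℕ) := fun b =>
    if h : ∃ u, tgDeg G u = b then h.choose else 0
  have hr : ∀ u, tgDeg G (r (tgDeg G u)) = tgDeg G u := by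
    intro u
    have h : ∃ u', tgDeg G u' = tgDeg G u := ⟨u, rfl⟩
    simp only [r, h, dite_true]
    exact h.choose_spec
  let ψ : MvPolynomial V K →ₗ[K] (MvPolynomial G.edgeSet K ⧸ J) :=
    (basisMonomials V K).constr K (fun b => Ideal.Quotient.mk J (monomial (r b) 1))
  have hψ : ∀ b, ψ (monomial b 1) = Ideal.Quotient.mk J (monomial (r b) 1) := by
    intro b
    have := (basisMonomials V K).constr_basis K
      (fun b => Ideal.Quotient.mk J (monomial (r b) 1)) b
    rw [coe_basisMonomials] at this
    exact this
  have hcomp : ψ ∘ₗ (graphHom K G).toLinearMap = (Ideal.Quotient.mkₐ K J).toLinearMap := by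
    apply (basisMonomials G.edgeSet K).ext
    intro u
    rw [coe_basisMonomials]
    change ψ (graphHom K G (monomial u 1)) = Ideal.Quotient.mk J (monomial u 1)
    rw [tgHom_mon, hψ, Ideal.Quotient.eq]
    exact hJ _ _ (hr u)
  intro f hf
  rw [toricIdealGraph, RingHom.mem_ker] at hf
  have h0 : graphHom K G f = 0 := hf
  have := LinearMap.congr_fun hcomp f
  change ψ (graphHom K G f) = Ideal.Quotient.mk J f at this
  rw [h0, map_zero] at this
  exact Ideal.Quotient.eq_zero_iff_mem.1 this.symm

open Classical in
noncomputable def tgN (G : SimpleGraph V) [Fintype V] : ℕ :=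
  ∑ W ∈ Finset.univ.filter (fun W : Finset V => tgBad G W), ((tgF G W).ncard - 1)

lemma tgGen (K : Type*) [Field K] [Fintype V] (hG : tgGap G) :
    ∃ B : Finset (MvPolynomial G.edgeSet K), B.card ≤ tgN G ∧ (∀ f ∈ B, IsBinom f) ∧
      Ideal.span (B : Set (MvPolynomial G.edgeSet K)) = toricIdealGraph K G := by
  classical
  choose! m hm using fun (W : Finset V) (hW : tgBad G W) => hW.1
  let B : Finset (MvPolynomial G.edgeSet K) :=
    (Finset.univ.filter (fun W : Finset V => tgBad G W)).biUnion fun W =>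
      ((tgF_finite (G := G) W).toFinset.erase (m W)).image
        (fun t => monomial (m W) 1 - monomial t 1)
  have hB : ∀ f, f ∈ B ↔ ∃ W, tgBad G W ∧ ∃ t ∈ tgF G W, t ≠ m W ∧
      monomial (m W) 1 - monomial t 1 = f := by
    intro f
    simp only [B, Finset.mem_biUnion, Finset.mem_filter, Finset.mem_univ, true_and,
      Finset.mem_image, Finset.mem_erase, Set.Finite.mem_toFinset]
    constructor
    · rintro ⟨W, h1, t, ⟨h2, h3⟩, h4⟩; exact ⟨W, h1, t, h3, h2, h4⟩
    · rintro ⟨W, h1, t, h3, h2, h4⟩; exact ⟨W, h1, t, ⟨h2, h3⟩, h4⟩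
  refine ⟨B, ?_, ?_, ?_⟩
  · refine Finset.card_biUnion_le.trans (Finset.sum_le_sum ?_)
    intro W hW
    rw [Finset.mem_filter] at hW
    refine Finset.card_image_le.trans ?_
    rw [Finset.card_erase_of_mem (by simpa using (hm W hW.2).1), ← Set.ncard_eq_toFinset_card _ (tgF_finite W)]
  · intro f hf
    obtain ⟨W, _, t, _, _, rfl⟩ := (hB f).1 hf
    exact ⟨_, _, rfl⟩
  · apply le_antisymm
    · rw [Ideal.span_le]
      intro f hf
      obtain ⟨W, h1, t, h2, _, rfl⟩ := (hB f).1 hf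
      exact (tgMemI K _ _).2 ((hm W h1).1.trans h2.symm)
    · apply tg_span
      set J := Ideal.span (B : Set (MvPolynomial G.edgeSet K)) with hJ
      have hbase : ∀ W, tgBad G W → ∀ t ∈ tgF G W,
          (monomial (m W) 1 - monomial t 1 : MvPolynomial G.edgeSet K) ∈ J := by
        intro W hW t ht
        by_cases h : t = m W
        · rw [h, sub_self]; exact J.zero_mem
        · exact Ideal.subset_span ((hB _).2 ⟨W, hW, t, ht, h, rfl⟩)
      have key : ∀ n (u v : G.edgeSet →₀ ℕ), u.degree = n → tgDeg G u = tgDeg G v →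
          (monomial u 1 - monomial v 1 : MvPolynomial G.edgeSet K) ∈ J := by
        intro n
        induction n using Nat.strong_induction_on with
        | _ n ih =>
          intro u v hn hd
          by_cases hc : tgCn G u v
          · have : ∀ t s, tgCn G t s → t.degree = n →
                (monomial t 1 - monomial s 1 : MvPolynomial G.edgeSet K) ∈ J := by
              intro t s hts
              induction hts with
              | rel t s h =>
                intro hn
                obtain ⟨x, y, u', v', _, rfl, rfl, hd', hdg⟩ := tgSh_split h
                have := ih u'.degree (by omega) u' v' rfl hd'
                have h2 := J.mul_mem_left (monomial (tgEd G x y) 1) this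
                rwa [mul_sub, monomial_mul, monomial_mul, one_mul] at h2
              | refl => intro _; rw [sub_self]; exact J.zero_mem
              | symm a b hab ih =>
                intro hn
                have := ih ((tg_degree_eq (tgCn_deg hab)).trans hn)
                rw [← neg_sub]; exact J.neg_mem this
              | trans a b c hab hbc ih1 ih2 =>
                intro hn
                have h1 := ih1 hn
                have h2 := ih2 ((tg_degree_eq (tgCn_deg hab)).symm.trans hn)
                have := J.add_mem h1 h2
                rwa [sub_add_sub_cancel] at this
            exact this u v hc hn
          · obtain ⟨hu, hv, hb⟩ := tgBad_of hG hd hc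
            have := J.sub_mem (hbase _ hb v hv) (hbase _ hb u hu)
            rwa [sub_sub_sub_cancel_left] at this
      intro u v huv
      exact key _ u v rfl huv

open Classical in
/-- the characteristic point of the support of `m` -/
noncomputable def tgPt (K : Type*) [Field K] (m : G.edgeSet →₀ ℕ) : G.edgeSet → K :=
  fun e => if m e ≠ 0 then 1 else 0

open Classical in
lemma tgPt_eval (K : Type*) [Field K] (m u : G.edgeSet →₀ ℕ) :
    eval (tgPt K m) (monomial u 1) = if ∀ e, u e ≠ 0 → m e ≠ 0 then 1 else 0 := by
  rw [eval_monomial, one_mul, Finsupp.prod]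
  split_ifs with h
  · apply Finset.prod_eq_one
    intro e he
    rw [Finsupp.mem_support_iff] at he
    simp [tgPt, h e he]
  · push Not at h
    obtain ⟨e, h1, h2⟩ := h
    apply Finset.prod_eq_zero (i := e) (by simpa using h1)
    simp [tgPt, h2, h1]

lemma tgLow (K : Type*) [Field K] [Fintype V] (hG : tgGap G) {s : ℕ}
    (B : Fin s → MvPolynomial G.edgeSet K)
    (h1 : ∀ j, IsBinom (B j) ∧ B j ∈ toricIdealGraph K G)
    (h2 : (toricIdealGraph K G).radical = (Ideal.span (Set.range B)).radical) : tgN G ≤ s := by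
  classical
  choose P Q hPQ using fun j => (h1 j).1
  have hdeg : ∀ j, tgDeg G (P j) = tgDeg G (Q j) := by
    intro j
    have := (h1 j).2
    rw [hPQ j] at this
    exact (tgMemI K _ _).1 this
  let S : Finset V → Finset (Fin s) := fun W =>
    Finset.univ.filter fun j => (tgDeg G (P j)).support = W
  let R : Fin s × Bool → (G.edgeSet →₀ ℕ) := fun p => if p.2 then P p.1 else Q p.1
  have main : ∀ W, tgBad G W → (tgF G W).ncard ≤ 2 * (S W).card := by
    intro W hW
    have step : ∀ m ∈ tgF G W, ∃ p : Fin s × Bool, p.1 ∈ S W ∧ (R p).support = m.support := by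
      intro m hm
      obtain ⟨m', hm', hne⟩ : ∃ m' ∈ tgF G W, m' ≠ m := by
        obtain ⟨u, hu, v, hv, huv⟩ := hW.1
        by_cases h : u = m
        · exact ⟨v, hv, fun k => huv (h.trans k.symm)⟩
        · exact ⟨u, hu, h⟩
      have hf : (monomial m 1 - monomial m' 1 : MvPolynomial G.edgeSet K) ∈
          toricIdealGraph K G := (tgMemI K _ _).2 (hm.trans hm'.symm)
      have hf2 : (monomial m 1 - monomial m' 1 : MvPolynomial G.edgeSet K) ∈
          (Ideal.span (Set.range B)).radical := by
        rw [← h2]; exact Ideal.le_radical hf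
      have hev : eval (tgPt K m) (monomial m 1 - monomial m' 1) ≠ 0 := by
        rw [map_sub, tgPt_eval, tgPt_eval, if_pos (fun _ k => k), if_neg]
        · simp
        · intro hs
          have hle : m' ≤ m := tg_le_of hs (tgF_sq hm')
          exact hne (tg_eq_of_le hle (hm'.trans hm.symm))
      have hex : ∃ j, eval (tgPt K m) (B j) ≠ 0 := by
        by_contra hc
        push Not at hc
        apply hev
        have hle : Ideal.span (Set.range B) ≤ RingHom.ker (eval (tgPt K m)) := by
          rw [Ideal.span_le]
          rintro _ ⟨j, rfl⟩
          exact hc j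
        have hr : (RingHom.ker (eval (tgPt K m))).IsPrime := RingHom.ker_isPrime _
        have := Ideal.radical_mono hle hf2
        rw [hr.radical] at this
        exact this
      obtain ⟨j, hj⟩ := hex
      rw [hPQ j, map_sub, tgPt_eval, tgPt_eval] at hj
      have fin : ∀ u v : G.edgeSet →₀ ℕ, tgDeg G u = tgDeg G v → (∀ e, u e ≠ 0 → m e ≠ 0) →
          ¬ (∀ e, v e ≠ 0 → m e ≠ 0) → (tgDeg G u).support = W ∧ u.support = m.support := by
        intro u v hd hu hv
        have hsup : u.support = m.support := by
          by_contra hc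
          have hex : ∃ e, m e ≠ 0 ∧ u e = 0 := by
            by_contra hc2
            push Not at hc2
            apply hc
            ext e
            rw [Finsupp.mem_support_iff, Finsupp.mem_support_iff]
            exact ⟨hu e, hc2 e⟩
          have := tgC hG (tgF_sq hm) (hW.2 m hm) _ u v rfl hu hex hd
          rw [this] at hv
          exact hv hu
        refine ⟨?_, hsup⟩
        rw [tg_supp hsup, ← tgInd_support W]
        rw [show tgDeg G m = tgInd W from hm]
      by_cases a : ∀ e, P j e ≠ 0 → m e ≠ 0
      · by_cases b : ∀ e, Q j e ≠ 0 → m e ≠ 0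
        · rw [if_pos a, if_pos b, sub_self] at hj; exact absurd rfl hj
        · obtain ⟨c, d⟩ := fin _ _ (hdeg j) a b
          exact ⟨(j, true), by simpa [S] using c, by simpa [R] using d⟩
      · by_cases b : ∀ e, Q j e ≠ 0 → m e ≠ 0
        · obtain ⟨c, d⟩ := fin _ _ (hdeg j).symm b a
          exact ⟨(j, false), by simpa [S, hdeg j] using c, by simpa [R] using d⟩
        · rw [if_neg a, if_neg b, sub_self] at hj; exact absurd rfl hj
    obtain ⟨p0, _⟩ := step _ hW.1.choose_spec.1
    have : Nonempty (Fin s × Bool) := ⟨p0⟩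
    choose! g hg using step
    have hmap : Set.MapsTo g (tgF G W) ((S W ×ˢ Finset.univ : Finset (Fin s × Bool)) :
        Set (Fin s × Bool)) := by
      intro m hm
      simpa using (hg m hm).1
    have hinj : Set.InjOn g (tgF G W) := by
      intro a ha b hb hab
      apply tgSq_ext (tgF_sq ha) (tgF_sq hb)
      rw [← (hg a ha).2, ← (hg b hb).2, hab]
    have h5 := Set.ncard_le_ncard_of_injOn g hmap hinj (Finset.finite_toSet _)
    rw [Set.ncard_coe_finset, Finset.card_product] at h5
    simp at h5
    omega
  calc tgN G ≤ ∑ W ∈ Finset.univ.filter (fun W : Finset V => tgBad G W), (S W).card := by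
        apply Finset.sum_le_sum
        intro W hW
        rw [Finset.mem_filter] at hW
        have a := main W hW.2
        have b := tgBad_card hG hW.2
        omega
    _ ≤ ∑ W : Finset V, (S W).card :=
        Finset.sum_le_sum_of_subset (Finset.filter_subset _ _)
    _ = (Finset.univ : Finset (Fin s)).card :=
        (Finset.card_eq_sum_card_fiberwise (fun _ _ => Finset.mem_univ _)).symm
    _ = s := by simp

lemma tgGap_of (h : ∀ e ∈ G.edgeSet, ∀ e' ∈ G.edgeSet, (∀ v : V, v ∈ e → v ∉ e') →
      ∃ e'' ∈ G.edgeSet, (∃ v : V, v ∈ e ∧ v ∈ e'') ∧ (∃ v : V, v ∈ e' ∧ v ∈ e'')) :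
    tgGap G := by
  intro a b c d hab hcd h1 h2 h3 h4
  obtain ⟨e, he, ⟨v, hv, hve⟩, ⟨w, hw, hwe⟩⟩ := h s(a, b) hab s(c, d) hcd (by
    intro v hv hv'
    rw [Sym2.mem_iff] at hv hv'
    rcases hv with rfl | rfl <;> rcases hv' with rfl | rfl <;> contradiction)
  rw [Sym2.mem_iff] at hv hw
  have hvw : v ≠ w := by
    rcases hv with rfl | rfl <;> rcases hw with rfl | rfl <;> assumption
  have : e = s(v, w) := (Sym2.mem_and_mem_iff hvw).1 ⟨hve, hwe⟩
  subst this
  rw [SimpleGraph.mem_edgeSet] at he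
  rcases hv with rfl | rfl <;> rcases hw with rfl | rfl <;> tauto

end tg

theorem stmt7 (K : Type*) [Field K] (V : Type*) [Fintype V] (G : SimpleGraph V)
    (hconn : G.Connected)
    (h : ∀ e ∈ G.edgeSet, ∀ e' ∈ G.edgeSet, (∀ v : V, v ∈ e → v ∉ e') →
      ∃ e'' ∈ G.edgeSet, (∃ v : V, v ∈ e ∧ v ∈ e'') ∧ (∃ v : V, v ∈ e' ∧ v ∈ e'')) :
    barI (toricIdealGraph K G) = muI (toricIdealGraph K G) := by
  classical
  have hG : tgGap G := tgGap_of h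
  obtain ⟨B0, hc0, hb0, hs0⟩ := tgGen K hG
  have hmu : muI (toricIdealGraph K G) ≤ tgN G :=
    le_trans (Nat.sInf_le ⟨B0, rfl, hb0, hs0⟩) hc0
  have conv : ∀ B : Finset (MvPolynomial G.edgeSet K), (∀ f ∈ B, IsBinom f) →
      Ideal.span (B : Set (MvPolynomial G.edgeSet K)) = toricIdealGraph K G →
      ∃ b : Fin B.card → MvPolynomial G.edgeSet K,
        (∀ j, IsBinom (b j) ∧ b j ∈ toricIdealGraph K G) ∧
        (toricIdealGraph K G).radical = (Ideal.span (Set.range b)).radical := by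
    intro B hb hs
    have hr : Set.range (fun j => ((B.equivFin.symm j : B) : MvPolynomial G.edgeSet K)) =
        (B : Set (MvPolynomial G.edgeSet K)) := by
      ext f
      constructor
      · rintro ⟨j, rfl⟩; exact (B.equivFin.symm j).2
      · intro hf; exact ⟨B.equivFin ⟨f, hf⟩, by simp⟩
    refine ⟨fun j => ((B.equivFin.symm j : B) : MvPolynomial G.edgeSet K), ?_, ?_⟩
    · intro j
      refine ⟨hb _ (B.equivFin.symm j).2, ?_⟩
      rw [← hs]
      exact Ideal.subset_span (B.equivFin.symm j).2
    · rw [hr, hs]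
  apply le_antisymm
  · obtain ⟨B, hc, hb, hs⟩ := Nat.sInf_mem (s := {t | ∃ B : Finset (MvPolynomial G.edgeSet K),
        B.card = t ∧ (∀ f ∈ B, IsBinom f) ∧
        Ideal.span (B : Set (MvPolynomial G.edgeSet K)) = toricIdealGraph K G})
        ⟨_, B0, rfl, hb0, hs0⟩
    rw [muI, ← hc]
    exact Nat.sInf_le (conv B hb hs)
  · refine hmu.trans ?_
    obtain ⟨B, h1, h2⟩ := Nat.sInf_mem (s := {s | ∃ B : Fin s → MvPolynomial G.edgeSet K,
        (∀ j, IsBinom (B j) ∧ B j ∈ toricIdealGraph K G) ∧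
        (toricIdealGraph K G).radical = (Ideal.span (Set.range B)).radical})
        ⟨_, conv B0 hb0 hs0⟩
    exact tgLow K hG B h1 h2
end

section
/- For every 1 ≤ i < j ≤ m, the binomial f_{ij} = x_i^{d_i} y_j^{d_j} − x_j^{d_j} y_i^{d_i} is an indispensable binomial of I_2(D): every set of binomials generating I_2(D) contains f_{ij} or −f_{ij}. In particular, I_2(D) is generated by its indispensable binomials. -/
open MvPolynomial

variable (K : Type*) [Field K]

/-- The binomial `f_{ij} = x_i^{d_i} y_j^{d_j} − x_j^{d_j} y_i^{d_i}` in
`S = K[x_1,…,x_m,y_1,…,y_m]`, where the variable `x_i` is `X (Sum.inl i)` and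
`y_i` is `X (Sum.inr i)`. -/
noncomputable def fIJ {m : ℕ} (d : Fin m → ℕ) (i j : Fin m) :
    MvPolynomial (Fin m ⊕ Fin m) K :=
  X (Sum.inl i) ^ d i * X (Sum.inr j) ^ d j - X (Sum.inl j) ^ d j * X (Sum.inr i) ^ d i

/-- The ideal `I_2(D)` generated by the `2`-minors `f_{ij}`, `i < j`. -/
noncomputable def I2D {m : ℕ} (d : Fin m → ℕ) : Ideal (MvPolynomial (Fin m ⊕ Fin m) K) :=
  Ideal.span {g | ∃ i j : Fin m, i < j ∧ g = fIJ K d i j}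

/-- A binomial `g` is indispensable of `I`: every set of binomials generating `I`
contains `g` or `−g`. -/
def IsIndispBinom {K : Type*} [Field K] {σ : Type*} (I : Ideal (MvPolynomial σ K))
    (g : MvPolynomial σ K) : Prop :=
  ∀ B : Set (MvPolynomial σ K), (∀ f ∈ B, IsBinom f) → Ideal.span B = I →
    (g ∈ B ∨ -g ∈ B)

noncomputable def UU {m : ℕ} (d : Fin m → ℕ) (a b : Fin m) : (Fin m ⊕ Fin m) →₀ ℕ :=
  Finsupp.single (Sum.inl a) (d a) + Finsupp.single (Sum.inr b) (d b)

theorem fIJ_eq {m : ℕ} (d : Fin m → ℕ) (a b : Fin m) :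
    fIJ K d a b = monomial (UU d a b) 1 - monomial (UU d b a) 1 := by
  simp [fIJ, UU, X_pow_eq_monomial, monomial_mul]

theorem UU_le {m : ℕ} {d : Fin m → ℕ} (hd : ∀ i, 0 < d i) {a b i j : Fin m}
    (h : UU d a b ≤ UU d i j) : a = i ∧ b = j := by
  have h1 := h (Sum.inl a)
  have h2 := h (Sum.inr b)
  have ha := hd a
  have hb := hd b
  simp only [UU, Finsupp.add_apply, Finsupp.single_apply, Sum.inl.injEq, Sum.inr.injEq,
    reduceCtorEq, if_true, if_false] at h1 h2
  constructor
  · by_contra hne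
    rw [if_neg (Ne.symm hne)] at h1
    omega
  · by_contra hne
    rw [if_neg (Ne.symm hne)] at h2
    omega

theorem UU_le_iff {m : ℕ} {d : Fin m → ℕ} (hd : ∀ i, 0 < d i) {a b i j : Fin m} :
    UU d a b ≤ UU d i j ↔ a = i ∧ b = j :=
  ⟨UU_le hd, by rintro ⟨rfl, rfl⟩; exact le_rfl⟩

theorem span_coeff_zero {σ : Type*} (φ : MvPolynomial σ K → K) (h0 : φ 0 = 0)
    (hadd : ∀ x y, φ (x + y) = φ x + φ y) {B : Set (MvPolynomial σ K)}
    (hB : ∀ s, ∀ b ∈ B, φ (s * b) = 0) {g : MvPolynomial σ K} (hg : g ∈ Ideal.span B) :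
    φ g = 0 := by
  suffices h : ∀ s, φ (s * g) = 0 by simpa using h 1
  refine Submodule.span_induction (p := fun g _ => ∀ s, φ (s * g) = 0) ?_ ?_ ?_ ?_ hg
  · exact fun b hb s => hB s b hb
  · intro s; rw [mul_zero, h0]
  · intro x y _ _ hx hy s
    rw [mul_add, hadd, hx, hy, add_zero]
  · intro a x _ hx s
    rw [smul_eq_mul, ← mul_assoc]
    exact hx _

theorem coeff_small {m : ℕ} {d : Fin m → ℕ} (hd : ∀ i, 0 < d i) {i j : Fin m}
    {p : (Fin m ⊕ Fin m) →₀ ℕ} (hp : p ≤ UU d i j) (hne : p ≠ UU d i j)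
    {g : MvPolynomial (Fin m ⊕ Fin m) K} (hg : g ∈ I2D K d) : coeff p g = 0 := by
  have key : ∀ a b, ¬ UU d a b ≤ p := by
    intro a b h
    obtain ⟨rfl, rfl⟩ := UU_le hd (h.trans hp)
    exact hne (le_antisymm hp h)
  refine span_coeff_zero K (coeff p) (coeff_zero _) (fun _ _ => coeff_add _ _ _) ?_ hg
  rintro s _ ⟨a, b, -, rfl⟩
  rw [fIJ_eq, mul_sub, coeff_sub, coeff_mul_monomial', coeff_mul_monomial',
    if_neg (key _ _), if_neg (key _ _), sub_zero]

theorem coeff_pair {m : ℕ} {d : Fin m → ℕ} (hd : ∀ i, 0 < d i) {i j : Fin m}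
    {g : MvPolynomial (Fin m ⊕ Fin m) K} (hg : g ∈ I2D K d) :
    coeff (UU d i j) g + coeff (UU d j i) g = 0 := by
  refine span_coeff_zero K (fun g => coeff (UU d i j) g + coeff (UU d j i) g) (by simp)
    (fun x y => by simp only [coeff_add]; ring) ?_ hg
  rintro s _ ⟨a, b, -, rfl⟩
  simp only [fIJ_eq, mul_sub, coeff_sub, coeff_mul_monomial', UU_le_iff hd]
  by_cases h1 : a = i ∧ b = j
  · obtain ⟨rfl, rfl⟩ := h1
    by_cases h2 : a = b
    · subst h2; simp
    · simp [h2, Ne.symm h2]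
  · by_cases h2 : a = j ∧ b = i
    · obtain ⟨rfl, rfl⟩ := h2
      have h3 : a ≠ b := fun h => h1 ⟨h, h.symm⟩
      simp [h3, h3.symm]
    · rw [if_neg h1, if_neg h2, if_neg (fun h => h2 h.symm), if_neg (fun h => h1 h.symm)]
      simp

theorem fIJ_indisp {m : ℕ} {d : Fin m → ℕ} (hd : ∀ i, 0 < d i) {i j : Fin m} (hij : i < j) :
    IsIndispBinom (I2D K d) (fIJ K d i j) := by
  intro B hB hspan
  by_contra hcon
  push Not at hcon
  obtain ⟨hc1, hc2⟩ := hcon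
  have huv : UU d i j ≠ UU d j i := fun h => hij.ne (UU_le hd h.le).1
  have hf : fIJ K d i j ∈ Ideal.span B := by
    rw [hspan]; exact Ideal.subset_span ⟨i, j, hij, rfl⟩
  have h0 : coeff (UU d i j) (fIJ K d i j) = 0 := by
    refine span_coeff_zero K (coeff (UU d i j)) (coeff_zero _) (fun _ _ => coeff_add _ _ _) ?_ hf
    intro s b hb
    have hbI : b ∈ I2D K d := hspan ▸ Ideal.subset_span hb
    obtain ⟨p, q, rfl⟩ := hB b hb
    by_cases hpq : p = q
    · simp [hpq]
    have hpair := coeff_pair K hd (i := i) (j := j) hbI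
    have hpu : p ≠ UU d i j := by
      rintro rfl
      have hq : q = UU d j i := by
        by_contra hq
        simp [coeff_monomial, Ne.symm hpq, huv, hq] at hpair
      subst hq
      exact hc1 (by rw [fIJ_eq]; exact hb)
    have hqu : q ≠ UU d i j := by
      rintro rfl
      have hp : p = UU d j i := by
        by_contra hp
        simp [coeff_monomial, hpq, huv, hp] at hpair
      subst hp
      exact hc2 (by rw [fIJ_eq, neg_sub]; exact hb)
    have hpl : ¬ p ≤ UU d i j := by
      intro h
      have := coeff_small K hd h hpu hbI
      simp [coeff_monomial, Ne.symm hpq] at this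
    have hql : ¬ q ≤ UU d i j := by
      intro h
      have := coeff_small K hd h hqu hbI
      simp [coeff_monomial, hpq] at this
    rw [mul_sub, coeff_sub, coeff_mul_monomial', coeff_mul_monomial', if_neg hpl, if_neg hql,
      sub_zero]
  rw [fIJ_eq] at h0
  simp [coeff_monomial, huv.symm] at h0

theorem stmt8 (m : ℕ) (hm : 2 ≤ m) (d : Fin m → ℕ) (hd : ∀ i, 0 < d i) :
    (∀ i j : Fin m, i < j → IsIndispBinom (I2D K d) (fIJ K d i j)) ∧
    Ideal.span {g | IsBinom g ∧ g ∈ I2D K d ∧ IsIndispBinom (I2D K d) g} = I2D K d := by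
  refine ⟨fun i j hij => fIJ_indisp K hd hij, le_antisymm ?_ ?_⟩
  · exact Ideal.span_le.2 fun g hg => hg.2.1
  · refine Ideal.span_le.2 ?_
    rintro _ ⟨i, j, hij, rfl⟩
    exact Ideal.subset_span ⟨⟨_, _, fIJ_eq K d i j⟩, Ideal.subset_span ⟨i, j, hij, rfl⟩,
      fIJ_indisp K hd hij⟩
end

section
/- The ideal I_2(D) is saturated with respect to the product of all the variables: (I_2(D) : (x_1⋯x_m·y_1⋯y_m)^∞) = I_2(D), i.e., if f ∈ S and (x_1⋯x_m·y_1⋯y_m)^k·f ∈ I_2(D) for some k ≥ 0, then f ∈ I_2(D). -/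
open MvPolynomial

variable (K : Type*) [Field K]

theorem fIJ_mem {m : ℕ} (d : Fin m → ℕ) (i j : Fin m) (hij : i ≠ j) : fIJ K d i j ∈ I2D K d := by
  rcases lt_or_gt_of_ne hij with h | h
  · exact Ideal.subset_span ⟨i, j, h, rfl⟩
  · have h1 : fIJ K d j i ∈ I2D K d := Ideal.subset_span ⟨j, i, h, rfl⟩
    have h2 : fIJ K d i j = - fIJ K d j i := by unfold fIJ; ring
    rw [h2]
    exact neg_mem h1

theorem conn {m : ℕ} (d : Fin m → ℕ) : ∀ (n : ℕ) (u w : (Fin m ⊕ Fin m) →₀ ℕ) (c : Fin m → ℤ),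
    ∑ i, (c i).natAbs = n → ∑ i, c i = 0 →
    (∀ i, (u (Sum.inl i) : ℤ) - w (Sum.inl i) = d i * c i) →
    (∀ i, (u (Sum.inr i) : ℤ) - w (Sum.inr i) = - (d i * c i)) →
    (monomial u (1 : K) - monomial w 1) ∈ I2D K d := by
  intro n
  induction n using Nat.strong_induction_on with
  | _ n ih =>
  intro u w c hn hc hl hr
  by_cases h0 : ∀ i, c i = 0
  · have : u = w := by
      ext v
      rcases v with i | i
      · have := hl i
        rw [h0 i] at this
        simp at this; omega
      · have := hr i
        rw [h0 i] at this
        simp at this; omega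
    simp [this]
  · push Not at h0
    obtain ⟨l, hl0⟩ := h0
    obtain ⟨i, -, hi⟩ : ∃ i ∈ Finset.univ, 0 < c i :=
      Finset.exists_pos_of_sum_zero_of_exists_nonzero c hc ⟨l, Finset.mem_univ _, hl0⟩
    obtain ⟨j, -, hj⟩ : ∃ i ∈ Finset.univ, 0 < (- c) i :=
      Finset.exists_pos_of_sum_zero_of_exists_nonzero (-c) (by simp [hc])
        ⟨l, Finset.mem_univ _, by simpa using hl0⟩
    simp only [Pi.neg_apply] at hj
    have hij : i ≠ j := by rintro rfl; omega
    have hui : d i ≤ u (Sum.inl i) := by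
      have := hl i
      zify; nlinarith
    have huj : d j ≤ u (Sum.inr j) := by
      have := hr j
      zify; nlinarith
    set p : (Fin m ⊕ Fin m) →₀ ℕ :=
      Finsupp.single (Sum.inl i) (d i) + Finsupp.single (Sum.inr j) (d j) with hp
    set q : (Fin m ⊕ Fin m) →₀ ℕ :=
      Finsupp.single (Sum.inl j) (d j) + Finsupp.single (Sum.inr i) (d i) with hq
    have hpu : p ≤ u := by
      intro v
      rcases v with v | v
      · simp only [hp, Finsupp.add_apply, Finsupp.single_apply]
        by_cases h : i = v
        · subst h; simpa using hui
        · simp [h]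
      · simp only [hp, Finsupp.add_apply, Finsupp.single_apply]
        by_cases h : j = v
        · subst h; simpa using huj
        · simp [h]
    obtain ⟨t, rfl⟩ := exists_add_of_le hpu
    have h1 : (monomial (p + t) (1 : K) - monomial (q + t) 1) ∈ I2D K d := by
      have : (monomial (p + t) (1 : K) - monomial (q + t) 1) = monomial t 1 * fIJ K d i j := by
        simp only [fIJ, X_pow_eq_monomial, mul_sub, monomial_mul, hp, hq, mul_one]
        congr 2 <;> congr 1 <;> abel
      rw [this]
      exact Ideal.mul_mem_left _ _ (fIJ_mem K d i j hij)
    let c' : Fin m → ℤ := fun k => c k - (if k = i then 1 else 0) + (if k = j then 1 else 0)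
    have h2 : (monomial (q + t) (1 : K) - monomial w 1) ∈ I2D K d := by
      refine ih (∑ i, (c' i).natAbs) ?_ (q + t) w c' rfl ?_ ?_ ?_
      · rw [← hn]
        apply Finset.sum_lt_sum
        · intro k _
          simp only [c']
          split_ifs with h h' h'
          · omega
          · subst h; omega
          · subst h'; omega
          · omega
        · refine ⟨i, Finset.mem_univ _, ?_⟩
          simp only [c', hij, if_true, if_false]
          omega
      · simp [c', Finset.sum_add_distrib, Finset.sum_sub_distrib, hc]
      · intro k
        have := hl k
        simp only [hp, hq, c', Finsupp.add_apply, Finsupp.single_apply, Sum.inl.injEq, reduceCtorEq,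
          if_false, eq_comm (a := k)] at this ⊢
        split_ifs at this ⊢ with h h' <;> (try subst h) <;> (try subst h') <;>
          push_cast at this ⊢ <;> first | linarith | (exact absurd rfl hij) | grind
      · intro k
        have := hr k
        simp only [hp, hq, c', Finsupp.add_apply, Finsupp.single_apply, Sum.inr.injEq, reduceCtorEq,
          if_false, eq_comm (a := k)] at this ⊢
        split_ifs at this ⊢ with h h' <;> (try subst h) <;> (try subst h') <;>
          push_cast at this ⊢ <;> first | linarith | (exact absurd rfl hij) | grind
    have := add_mem h1 h2
    simpa using this

/-- The lattice of exponent differences of the ideal. -/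
def latL {m : ℕ} (d : Fin m → ℕ) : AddSubgroup (Fin m ⊕ Fin m → ℤ) where
  carrier := {v | ∃ c : Fin m → ℤ, ∑ i, c i = 0 ∧ (∀ i, v (Sum.inl i) = d i * c i) ∧
    ∀ i, v (Sum.inr i) = - (d i * c i)}
  zero_mem' := ⟨0, by simp⟩
  add_mem' := by
    rintro v w ⟨c, h1, h2, h3⟩ ⟨e, h4, h5, h6⟩
    refine ⟨c + e, by simp [Finset.sum_add_distrib, h1, h4], fun i => ?_, fun i => ?_⟩
    · simp [h2, h5]; ring
    · simp [h3, h6]; ring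
  neg_mem' := by
    rintro v ⟨c, h1, h2, h3⟩
    exact ⟨-c, by simp [h1], fun i => by simp [h2], fun i => by simp [h3]⟩

/-- The multidegree map. -/
noncomputable def degPi {m : ℕ} (d : Fin m → ℕ) :
    ((Fin m ⊕ Fin m) →₀ ℕ) →+ ((Fin m ⊕ Fin m → ℤ) ⧸ latL d) :=
  (QuotientAddGroup.mk' (latL d)).comp
    { toFun := fun u v => (u v : ℤ)
      map_zero' := by ext; simp
      map_add' := by intros; ext; simp }

theorem degPi_eq_iff {m : ℕ} (d : Fin m → ℕ) (u w : (Fin m ⊕ Fin m) →₀ ℕ) :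
    degPi d w = degPi d u ↔ ∃ c : Fin m → ℤ, ∑ i, c i = 0 ∧
    (∀ i, (u (Sum.inl i) : ℤ) - w (Sum.inl i) = d i * c i) ∧
    (∀ i, (u (Sum.inr i) : ℤ) - w (Sum.inr i) = - (d i * c i)) := by
  refine (QuotientAddGroup.eq (s := latL d)).trans ?_
  change (∃ c : Fin m → ℤ, _) ↔ _
  simp only [Pi.add_apply, Pi.neg_apply, AddMonoidHom.coe_mk, ZeroHom.coe_mk, neg_add_eq_sub]

theorem mono_mem {m : ℕ} (d : Fin m → ℕ) (u w : (Fin m ⊕ Fin m) →₀ ℕ)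
    (h : degPi d w = degPi d u) : (monomial u (1 : K) - monomial w 1) ∈ I2D K d := by
  obtain ⟨c, h1, h2, h3⟩ := (degPi_eq_iff d u w).1 h
  exact conn K d _ u w c rfl h1 h2 h3

/-- The graded quotient map. -/
noncomputable def psi {m : ℕ} (d : Fin m → ℕ) : MvPolynomial (Fin m ⊕ Fin m) K →+*
    AddMonoidAlgebra K ((Fin m ⊕ Fin m → ℤ) ⧸ latL d) :=
  AddMonoidAlgebra.mapDomainRingHom K (degPi d)

theorem psi_monomial {m : ℕ} (d : Fin m → ℕ) (u : (Fin m ⊕ Fin m) →₀ ℕ) (a : K) :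
    psi K d (monomial u a) = AddMonoidAlgebra.single (degPi d u) a :=
  AddMonoidAlgebra.mapDomain_single

theorem I2D_le {m : ℕ} (d : Fin m → ℕ) : I2D K d ≤ RingHom.ker (psi K d) := by
  refine Ideal.span_le.2 ?_
  rintro _ ⟨i, j, hij, rfl⟩
  have hij := hij.ne
  simp only [SetLike.mem_coe, RingHom.mem_ker, fIJ, X_pow_eq_monomial, monomial_mul, map_sub,
    psi_monomial, mul_one]
  rw [sub_eq_zero]
  congr 1
  rw [degPi_eq_iff]
  refine ⟨fun k => (if k = j then 1 else 0) - (if k = i then 1 else 0), by simp, ?_, ?_⟩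
  · intro k
    simp only [Finsupp.add_apply, Finsupp.single_apply, Sum.inl.injEq, reduceCtorEq,
          if_false, eq_comm (a := k)]
    split_ifs with h h' <;> (try subst h) <;> (try subst h') <;> push_cast <;> simp_all
  · intro k
    simp only [Finsupp.add_apply, Finsupp.single_apply, Sum.inr.injEq, reduceCtorEq,
          if_false, eq_comm (a := k)]
    split_ifs with h h' <;> (try subst h) <;> (try subst h') <;> push_cast <;> simp_all

theorem le_I2D {m : ℕ} (d : Fin m → ℕ) (f : MvPolynomial (Fin m ⊕ Fin m) K)
    (hf : psi K d f = 0) : f ∈ I2D K d := by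
  let r := Function.invFun (degPi d)
  have hr : ∀ u, degPi d (r (degPi d u)) = degPi d u := fun u =>
    Function.invFun_eq ⟨u, rfl⟩
  let L : AddMonoidAlgebra K ((Fin m ⊕ Fin m → ℤ) ⧸ latL d) → MvPolynomial (Fin m ⊕ Fin m) K :=
    AddMonoidAlgebra.mapDomain r
  have key : ∀ g, g - L (psi K d g) ∈ I2D K d := by
    intro g
    induction g using MvPolynomial.induction_on' with
    | monomial u a =>
      have h1 : L (psi K d (monomial u a)) = monomial (r (degPi d u)) a := by
        rw [psi_monomial]
        exact AddMonoidAlgebra.mapDomain_single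
      rw [h1]
      have h2 := Ideal.mul_mem_left _ (C a) (mono_mem K d u (r (degPi d u)) (hr u))
      simpa [mul_sub, C_mul_monomial] using h2
    | add p q hp hq =>
      have h1 : L (psi K d (p + q)) = L (psi K d p) + L (psi K d q) := by
        rw [map_add]
        exact AddMonoidAlgebra.mapDomain_add ..
      rw [h1, add_sub_add_comm]
      exact add_mem hp hq
  have h := key f
  have h0 : L 0 = 0 := AddMonoidAlgebra.mapDomain_zero ..
  rw [hf, h0, sub_zero] at h
  exact h

theorem stmt9 (m : ℕ) (hm : 2 ≤ m) (d : Fin m → ℕ) (hd : ∀ i, 0 < d i)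
    (f : MvPolynomial (Fin m ⊕ Fin m) K) (k : ℕ)
    (h : (∏ v : Fin m ⊕ Fin m, X v) ^ k * f ∈ I2D K d) :
    f ∈ I2D K d := by
  apply le_I2D
  have h1 := I2D_le K d h
  rw [RingHom.mem_ker, map_mul, map_pow, map_prod] at h1
  refine (IsUnit.mul_right_eq_zero ?_).1 h1
  apply IsUnit.pow
  rw [IsUnit.prod_univ_iff]
  intro v
  have h2 : psi K d (X v) = AddMonoidAlgebra.single (degPi d (Finsupp.single v 1)) 1 :=
    psi_monomial K d _ 1
  rw [h2]
  refine IsUnit.of_mul_eq_one (AddMonoidAlgebra.single (-degPi d (Finsupp.single v 1)) 1) ?_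
  rw [AddMonoidAlgebra.single_mul_single, add_neg_cancel, mul_one]
  rfl
end

section
/- The ideal I_2(D) equals the lattice ideal of the lattice L ⊆ ℤ^{2m} generated by the vectors v_{1j} = (u_{1j}, −u_{1j}) for 2 ≤ j ≤ m, where u_{1j} ∈ ℤ^m has first coordinate d_1, j-th coordinate −d_j, and all other coordinates 0; that is, I_2(D) = ({z^{v⁺} − z^{v⁻} : v ∈ L}), where z^w denotes the monomial in the 2m variables x_1,…,x_m,y_1,…,y_m with exponent vector w ∈ ℕ^{2m}. -/
open MvPolynomial

variable (K : Type*) [Field K]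

/-- The vector `u_{1j} ∈ ℤ^m`: first coordinate `d_1`, `j`-th coordinate `−d_j`,
all other coordinates `0`. -/
def u1j {m : ℕ} (d : Fin (m + 2) → ℕ) (j : Fin (m + 2)) : Fin (m + 2) → ℤ :=
  fun k => if k = 0 then (d 0 : ℤ) else if k = j then -(d j : ℤ) else 0

/-- The vector `v_{1j} = (u_{1j}, −u_{1j}) ∈ ℤ^{2m}`. -/
def v1j {m : ℕ} (d : Fin (m + 2) → ℕ) (j : Fin (m + 2)) :
    (Fin (m + 2) ⊕ Fin (m + 2)) → ℤ :=
  Sum.elim (u1j d j) (fun k => -(u1j d j k))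

/-- The lattice `L ⊆ ℤ^{2m}` generated by the vectors `v_{1j}`, `2 ≤ j ≤ m`. -/
def latticeL {m : ℕ} (d : Fin (m + 2) → ℕ) :
    AddSubgroup ((Fin (m + 2) ⊕ Fin (m + 2)) → ℤ) :=
  AddSubgroup.closure {v | ∃ j : Fin (m + 2), j ≠ 0 ∧ v = v1j d j}

/-- The lattice ideal of a lattice `L ⊆ ℤ^{2m}`:
generated by the binomials `z^{v⁺} − z^{v⁻}`, `v ∈ L`. -/
noncomputable def latticeIdealOf {m : ℕ}
    (L : AddSubgroup ((Fin (m + 2) ⊕ Fin (m + 2)) → ℤ)) :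
    Ideal (MvPolynomial (Fin (m + 2) ⊕ Fin (m + 2)) K) :=
  Ideal.span {g | ∃ v ∈ L,
    g = (∏ s, X s ^ (v s).toNat) - (∏ s, X s ^ (-(v s)).toNat)}

lemma aux_prod {R ι : Type*} [CommRing R] [Fintype ι] [DecidableEq ι] (x y : ι → R)
    (h : ∀ i j, x i * y j = x j * y i) (n : ℕ) :
    ∀ a b : ι → ℕ, ∑ i, a i = n → ∑ i, b i = n →
      (∏ i, x i ^ a i) * ∏ i, y i ^ b i = (∏ i, x i ^ b i) * ∏ i, y i ^ a i := by
  have dec : ∀ (n : ℕ) (a : ι → ℕ), ∑ i, a i = n + 1 →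
      ∃ i, ∃ a' : ι → ℕ, ∑ i, a' i = n ∧
        ∀ z : ι → R, ∏ k, z k ^ a k = z i * ∏ k, z k ^ a' k := by
    intro n a ha
    have : ∃ i, a i ≠ 0 := by
      by_contra! hc
      simp [hc] at ha
    obtain ⟨i, hi⟩ := this
    have hs : a = fun k => (if k = i then 1 else 0) + (if k = i then a i - 1 else a k) := by
      funext k
      by_cases hk : k = i
      · subst hk; simp; omega
      · simp [hk]
    refine ⟨i, fun k => if k = i then a i - 1 else a k, ?_, ?_⟩
    · rw [hs, Finset.sum_add_distrib] at ha
      rw [Finset.sum_ite_eq' Finset.univ i (fun _ => 1)] at ha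
      simp only [Finset.mem_univ, if_true, if_pos] at ha
      have e : ∀ p q : ℕ, 1 + p = q + 1 → p = q := fun p q h => by omega
      exact e _ _ ha
    · intro z
      conv_lhs => rw [hs]
      simp only [pow_add, Finset.prod_mul_distrib]
      congr 1
      simp
  induction n with
  | zero =>
    intro a b ha hb
    simp at ha hb
    simp [ha, hb]
  | succ n ih =>
    intro a b ha hb
    obtain ⟨i, a', ha', hA⟩ := dec n a ha
    obtain ⟨j, b', hb', hB⟩ := dec n b hb
    rw [hA, hA, hB, hB]
    have := ih a' b' ha' hb'
    calc _ = (x i * y j) * ((∏ i, x i ^ a' i) * ∏ i, y i ^ b' i) := by ring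
      _ = _ := by rw [this, h i j]; ring

lemma aux_lattice {m : ℕ} (d : Fin (m + 2) → ℕ) (v : (Fin (m + 2) ⊕ Fin (m + 2)) → ℤ)
    (hv : v ∈ latticeL d) : ∃ c : Fin (m + 2) → ℤ, ∑ k, c k = 0 ∧
      (∀ k, v (Sum.inl k) = d k * c k) ∧ (∀ k, v (Sum.inr k) = -(d k * c k)) := by
  unfold latticeL at hv
  induction hv using AddSubgroup.closure_induction with
  | mem v h =>
    obtain ⟨j, hj, rfl⟩ := h
    have key : ∀ k, u1j d j k = d k * ((if k = 0 then 1 else 0) - (if k = j then 1 else 0)) := by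
      intro k
      unfold u1j
      by_cases h0 : k = 0
      · subst h0; simp [Ne.symm hj]
      · by_cases h1 : k = j
        · subst h1; simp [h0]
        · simp [h0, h1]
    refine ⟨fun k => (if k = 0 then 1 else 0) - (if k = j then 1 else 0), ?_, ?_, ?_⟩
    · rw [Finset.sum_sub_distrib]; simp
    · intro k; exact key k
    · intro k; simp only [v1j, Sum.elim_inr, key]
  | zero => exact ⟨0, by simp, by simp, by simp⟩
  | add a b _ _ ha hb =>
    obtain ⟨c, h1, h2, h3⟩ := ha
    obtain ⟨c', h1', h2', h3'⟩ := hb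
    refine ⟨c + c', by simp [Finset.sum_add_distrib, h1, h1'], ?_, ?_⟩
    · intro k; simp only [Pi.add_apply, h2, h2']; ring
    · intro k; simp only [Pi.add_apply, h3, h3']; ring
  | neg a _ ha =>
    obtain ⟨c, h1, h2, h3⟩ := ha
    refine ⟨-c, by simp [h1], ?_, ?_⟩
    · intro k; simp only [Pi.neg_apply, h2]; ring
    · intro k; simp only [Pi.neg_apply, h3]; ring

lemma aux_toNat (d : ℕ) (c : ℤ) : ((d : ℤ) * c).toNat = d * c.toNat := by
  rcases le_total 0 c with h | h
  · lift c to ℕ using h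
    rw [← Nat.cast_mul, Int.toNat_natCast, Int.toNat_natCast]
  · rw [Int.toNat_of_nonpos h, Int.toNat_of_nonpos (mul_nonpos_of_nonneg_of_nonpos (by simp) h)]
    simp

lemma aux_mem {m : ℕ} (d : Fin (m + 2) → ℕ) (i j : Fin (m + 2)) (hij : i < j) :
    (Sum.elim (fun k => (d k : ℤ) * ((if k = i then 1 else 0) - (if k = j then 1 else 0)))
      (fun k => -((d k : ℤ) * ((if k = i then 1 else 0) - (if k = j then 1 else 0)))) :
      (Fin (m + 2) ⊕ Fin (m + 2)) → ℤ) ∈ latticeL d := by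
  have hj : j ≠ 0 := by rintro rfl; exact absurd hij (by simp)
  have gen : ∀ j, j ≠ 0 → v1j d j ∈ latticeL d := fun j hj =>
    AddSubgroup.subset_closure ⟨j, hj, rfl⟩
  by_cases hi : i = 0
  · subst hi
    convert gen j hj using 1
    funext s
    rcases s with k | k <;> simp only [v1j, u1j, Sum.elim_inl, Sum.elim_inr] <;>
      by_cases h0 : k = 0 <;> by_cases h1 : k = j <;> simp_all
  · convert sub_mem (gen j hj) (gen i hi) using 1
    funext s
    rcases s with k | k <;> simp only [v1j, u1j, Sum.elim_inl, Sum.elim_inr, Pi.sub_apply] <;>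
      by_cases h0 : k = 0 <;> by_cases h1 : k = j <;> by_cases h2 : k = i <;> simp_all <;>
      first | omega | (exfalso; simp_all [eq_comm])

theorem stmt10 (m : ℕ) (d : Fin (m + 2) → ℕ) (hd : ∀ i, 0 < d i) :
    I2D K d = latticeIdealOf K (latticeL d) := by
  apply le_antisymm
  · unfold I2D
    rw [Ideal.span_le]
    rintro _ ⟨i, j, hij, rfl⟩
    refine Ideal.subset_span ⟨_, aux_mem d i j hij, ?_⟩
    have hne : i ≠ j := ne_of_lt hij
    have e1 : ∀ k, ((if k = i then (1:ℤ) else 0) - (if k = j then 1 else 0)).toNat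
        = if k = i then 1 else 0 := by
      intro k
      by_cases h1 : k = j <;> by_cases h2 : k = i <;> simp_all
    have e2 : ∀ k, (-((if k = i then (1:ℤ) else 0) - (if k = j then 1 else 0))).toNat
        = if k = j then 1 else 0 := by
      intro k
      by_cases h1 : k = j <;> by_cases h2 : k = i <;> simp_all
    simp only [Fintype.prod_sum_type, Sum.elim_inl, Sum.elim_inr, neg_neg, ← mul_neg, aux_toNat,
      e1, e2]
    simp only [neg_neg, e1, e2, mul_ite, mul_one, mul_zero, pow_ite, pow_zero,
      Finset.prod_ite_eq', Finset.prod_ite_eq, Finset.mem_univ, if_true]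
    rfl
  · unfold latticeIdealOf
    rw [Ideal.span_le]
    rintro _ ⟨v, hv, rfl⟩
    obtain ⟨c, h1, h2, h3⟩ := aux_lattice d v hv
    have hrel : ∀ i j : Fin (m + 2), fIJ K d i j ∈ I2D K d := by
      intro i j
      rcases lt_trichotomy i j with h | h | h
      · exact Ideal.subset_span ⟨i, j, h, rfl⟩
      · subst h; simp [fIJ]
      · have : fIJ K d i j = - fIJ K d j i := by unfold fIJ; ring
        rw [this]
        exact neg_mem (Ideal.subset_span ⟨j, i, h, rfl⟩)
    show _ ∈ I2D K d
    rw [← Ideal.Quotient.mk_eq_mk_iff_sub_mem]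
    have hs : ∑ k, (-c k).toNat = ∑ k, (c k).toNat := by
      zify
      rw [← sub_eq_zero, ← Finset.sum_sub_distrib, ← neg_eq_zero, ← Finset.sum_neg_distrib, ← h1]
      refine Finset.sum_congr rfl fun k _ => ?_
      simp only [Int.ofNat_toNat]
      omega
    have := aux_prod (fun k => Ideal.Quotient.mk (I2D K d) (X (Sum.inl k) ^ d k))
      (fun k => Ideal.Quotient.mk (I2D K d) (X (Sum.inr k) ^ d k))
      (fun i j => by
        rw [← map_mul, ← map_mul, Ideal.Quotient.mk_eq_mk_iff_sub_mem]
        exact hrel i j) _ (fun k => (c k).toNat) (fun k => (-c k).toNat) rfl hs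
    simp only [Fintype.prod_sum_type, h2, h3, neg_neg, ← mul_neg, aux_toNat, pow_mul, map_mul,
      map_prod, map_pow] at this ⊢
    exact this
end

section
/- The binomial arithmetical rank of I_2(D) equals m(m−1)/2: there exist m(m−1)/2 binomials B_1,…,B_{m(m−1)/2} ∈ I_2(D) with rad(I_2(D)) = rad((B_1,…,B_{m(m−1)/2})), and whenever rad(I_2(D)) = rad((B_1,…,B_s)) for binomials B_1,…,B_s ∈ I_2(D) one has s ≥ m(m−1)/2. -/
open MvPolynomial

variable (K : Type*) [Field K]

/-- The 0/1 point attached to a set of variables. -/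
noncomputable def pt12 {σ : Type*} (S : Set σ) : σ → K :=
  open Classical in fun a => if a ∈ S then 1 else 0

open Classical in
theorem eval_pt12 {σ : Type*} (S : Set σ) (u : σ →₀ ℕ) :
    eval (pt12 K S) (monomial u (1 : K)) = if (∀ a, u a ≠ 0 → a ∈ S) then 1 else 0 := by
  rw [eval_monomial, one_mul, Finsupp.prod]
  split_ifs with h
  · apply Finset.prod_eq_one
    intro a ha
    simp [pt12, h a (Finsupp.mem_support_iff.mp ha)]
  · push Not at h
    obtain ⟨a, ha, haS⟩ := h
    apply Finset.prod_eq_zero (Finsupp.mem_support_iff.mpr ha)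
    simp [pt12, haS, ha]

theorem eval_fIJ12 {m : ℕ} (d : Fin m → ℕ) (i j : Fin m) (p : Fin m ⊕ Fin m → K) :
    eval p (fIJ K d i j) = p (Sum.inl i) ^ d i * p (Sum.inr j) ^ d j
      - p (Sum.inl j) ^ d j * p (Sum.inr i) ^ d i := by
  simp [fIJ]

theorem eval_I2D12 {m : ℕ} (d : Fin m → ℕ) (p : Fin m ⊕ Fin m → K)
    (hp : ∀ i j, i < j → eval p (fIJ K d i j) = 0) (f : MvPolynomial (Fin m ⊕ Fin m) K)
    (hf : f ∈ I2D K d) : eval p f = 0 := by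
  have : I2D K d ≤ RingHom.ker (eval p) := by
    rw [I2D, Ideal.span_le]
    rintro g ⟨i, j, hij, rfl⟩
    exact hp i j hij
  exact this hf

theorem isBinom_fIJ12 {m : ℕ} (d : Fin m → ℕ) (i j : Fin m) : IsBinom (fIJ K d i j) := by
  refine ⟨Finsupp.single (Sum.inl i) (d i) + Finsupp.single (Sum.inr j) (d j),
    Finsupp.single (Sum.inl j) (d j) + Finsupp.single (Sum.inr i) (d i), ?_⟩
  simp [fIJ, X_pow_eq_monomial, monomial_mul]

/-- The set of the two variables `x_i`, `y_j`. -/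
def sP12 {m : ℕ} (i j : Fin m) : Set (Fin m ⊕ Fin m) := {Sum.inl i, Sum.inr j}

/-- The set of all variables with index in `T`. -/
def sQ12 {m : ℕ} (T : Set (Fin m)) : Set (Fin m ⊕ Fin m) := {a | Sum.elim id id a ∈ T}

theorem key12 {m : ℕ} (d : Fin m → ℕ) (hd : ∀ i, 0 < d i) (i j i' j' : Fin m)
    (hij : i < j) (hij' : i' < j')
    (B : MvPolynomial (Fin m ⊕ Fin m) K) (hb : IsBinom B) (hB : B ∈ I2D K d)
    (h1 : eval (pt12 K (sP12 i j)) B ≠ 0) (h2 : eval (pt12 K (sP12 i' j')) B ≠ 0) :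
    i = i' ∧ j = j' := by
  classical
  by_contra hne
  obtain ⟨u, v, rfl⟩ := hb
  have q : ∀ T : Set (Fin m),
      eval (pt12 K (sQ12 T)) (monomial u (1 : K) - monomial v 1) = 0 := by
    intro T
    refine eval_I2D12 K d _ ?_ _ hB
    intro a b _
    rw [eval_fIJ12]
    simp only [pt12, sQ12, Set.mem_setOf_eq, Sum.elim_inl, Sum.elim_inr, id]
    ring
  have r : eval (pt12 K (sP12 i j ∩ sQ12 {i', j'})) (monomial u (1 : K) - monomial v 1) = 0 := by
    refine eval_I2D12 K d _ ?_ _ hB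
    intro a b hab
    rw [eval_fIJ12]
    have ha := (hd a).ne'
    have hb := (hd b).ne'
    have e1 : ¬ (Sum.inl a ∈ sP12 i j ∩ sQ12 {i', j'} ∧ Sum.inr b ∈ sP12 i j ∩ sQ12 {i', j'}) := by
      simp [sP12, sQ12]
      grind
    have e2 : ¬ (Sum.inl b ∈ sP12 i j ∩ sQ12 {i', j'} ∧ Sum.inr a ∈ sP12 i j ∩ sQ12 {i', j'}) := by
      simp [sP12]
      grind
    simp only [pt12]
    split_ifs <;> simp_all
  have full : ∀ i j : Fin m,
      eval (pt12 K (sP12 i j)) (monomial u (1 : K) - monomial v 1) ≠ 0 →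
      (∀ a, u a ≠ 0 → a ∈ sQ12 {i, j}) ∧ (∀ a, v a ≠ 0 → a ∈ sQ12 {i, j}) := by
    intro i j h
    have hq := q {i, j}
    have hsub : ∀ a, a ∈ sP12 i j → a ∈ sQ12 {i, j} := by
      rintro a (rfl | rfl) <;> simp [sQ12]
    simp only [map_sub, eval_pt12] at h hq
    by_cases hu : ∀ a, u a ≠ 0 → a ∈ sQ12 {i, j} <;>
    by_cases hv : ∀ a, v a ≠ 0 → a ∈ sQ12 {i, j}
    · exact ⟨hu, hv⟩
    · rw [if_pos hu, if_neg hv] at hq; simp at hq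
    · rw [if_neg hu, if_pos hv] at hq; simp at hq
    · rw [if_neg (fun h' => hu fun a ha => hsub a (h' a ha)),
        if_neg (fun h' => hv fun a ha => hsub a (h' a ha))] at h
      simp at h
  obtain ⟨hu, hv⟩ := full i' j' h2
  apply h1
  rw [← r]
  simp only [map_sub, eval_pt12]
  congr 2
  · exact propext ⟨fun h a ha => ⟨h a ha, hu a ha⟩, fun h a ha => (h a ha).1⟩
  · exact propext ⟨fun h a ha => ⟨h a ha, hv a ha⟩, fun h a ha => (h a ha).1⟩

theorem card12 (m : ℕ) : Fintype.card (Σ j : Fin m, Fin j.val) = m * (m - 1) / 2 := by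
  rw [Fintype.card_sigma]
  simp only [Fintype.card_fin]
  rw [Fin.sum_univ_eq_sum_range (fun i => i), Finset.sum_range_id]

theorem stmt12 (m : ℕ) (hm : 2 ≤ m) (d : Fin m → ℕ) (hd : ∀ i, 0 < d i) :
    (∃ B : Fin (m * (m - 1) / 2) → MvPolynomial (Fin m ⊕ Fin m) K,
      (∀ k, IsBinom (B k) ∧ B k ∈ I2D K d) ∧
      (I2D K d).radical = (Ideal.span (Set.range B)).radical) ∧
    (∀ (s : ℕ) (B : Fin s → MvPolynomial (Fin m ⊕ Fin m) K),
      (∀ k, IsBinom (B k) ∧ B k ∈ I2D K d) →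
      (I2D K d).radical = (Ideal.span (Set.range B)).radical →
      m * (m - 1) / 2 ≤ s) := by
  constructor
  · let e : Fin (m * (m - 1) / 2) ≃ (Σ j : Fin m, Fin j.val) :=
      (Fintype.equivFinOfCardEq (card12 m)).symm
    let g : (Σ j : Fin m, Fin j.val) → MvPolynomial (Fin m ⊕ Fin m) K :=
      fun p => fIJ K d (p.2.castLE p.1.isLt.le) p.1
    refine ⟨fun k => g (e k), fun k => ⟨isBinom_fIJ12 K d _ _, Ideal.subset_span
      ⟨(e k).2.castLE (e k).1.isLt.le, (e k).1, (e k).2.isLt, rfl⟩⟩, ?_⟩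
    rw [I2D]
    apply congrArg Ideal.radical
    apply congrArg Ideal.span
    ext f
    constructor
    · rintro ⟨i, j, hij, rfl⟩
      exact ⟨e.symm ⟨j, ⟨i, hij⟩⟩, by simp [g]⟩
    · rintro ⟨k, rfl⟩
      exact ⟨(e k).2.castLE (e k).1.isLt.le, (e k).1, (e k).2.isLt, rfl⟩
  · intro s B hB hrad
    have hex : ∀ p : (Σ j : Fin m, Fin j.val), ∃ k,
        eval (pt12 K (sP12 (p.2.castLE p.1.isLt.le) p.1)) (B k) ≠ 0 := by
      rintro ⟨j, i⟩
      have hij : (i.castLE j.isLt.le) < j := i.isLt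
      generalize hi' : i.castLE j.isLt.le = i' at hij
      simp only [hi']
      by_contra! hcon
      have hmem : fIJ K d i' j ∈ (Ideal.span (Set.range B)).radical := by
        rw [← hrad]
        exact Ideal.le_radical (Ideal.subset_span ⟨i', j, hij, rfl⟩)
      obtain ⟨n, hn⟩ := hmem
      have hle : Ideal.span (Set.range B) ≤ RingHom.ker (eval (pt12 K (sP12 i' j))) := by
        rw [Ideal.span_le]
        rintro _ ⟨k, rfl⟩
        exact hcon k
      have h0 := hle hn
      rw [RingHom.mem_ker, map_pow, eval_fIJ12] at h0
      simp [pt12, sP12, hij.ne, hij.ne', (hd j).ne'] at h0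
    choose F hF using hex
    rw [← card12 m, ← Fintype.card_fin s]
    apply Fintype.card_le_of_injective F
    rintro ⟨j, i⟩ ⟨j', i'⟩ h
    have h1 := hF ⟨j, i⟩
    have h2 := hF ⟨j', i'⟩
    rw [← h] at h2
    obtain ⟨e1, e2⟩ := key12 K d hd _ _ _ _ i.isLt i'.isLt _ (hB _).1 (hB _).2 h1 h2
    dsimp only at e1 e2
    subst e2
    simp only [Fin.castLE_inj] at e1
    rw [e1]
end

section
/- The toric ideal I_A contains no binomial of the form x_i^{a} − M where a is a positive integer and M is a monomial not divisible by x_i, and no binomial of the form y_j^{a} − M where a is a positive integer and M is a monomial not divisible by y_j. -/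
open MvPolynomial

variable (K : Type*) [Field K]

/-- The `K`-algebra homomorphism `φ : S → K[t_1,…,t_{m+1}]` with
`φ(x_i) = t_1^{b_i} t_{i+1}` and `φ(y_i) = t_{i+1}`, where `b_i = ∏_{j ≠ i} d_j`.
(Here `t_1` is `X 0` and `t_{i+1}` is `X i.succ`.) -/
noncomputable def phiA {m : ℕ} (d : Fin m → ℕ) :
    MvPolynomial (Fin m ⊕ Fin m) K →ₐ[K] MvPolynomial (Fin (m + 1)) K :=
  aeval (Sum.elim
    (fun i : Fin m => X 0 ^ (∏ j ∈ Finset.univ.erase i, d j) * X i.succ)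
    (fun i : Fin m => X i.succ))

/-- The toric ideal `I_A` of the Lawrence lifting of `(b_1,…,b_m)`. -/
noncomputable def IA {m : ℕ} (d : Fin m → ℕ) : Ideal (MvPolynomial (Fin m ⊕ Fin m) K) :=
  RingHom.ker (phiA K d).toRingHom

theorem IA_eval {m : ℕ} (d : Fin m → ℕ) (s : Fin m ⊕ Fin m) (a : ℕ)
    (w : (Fin m ⊕ Fin m) →₀ ℕ) (h : X s ^ a - monomial w (1 : K) ∈ IA K d)
    (e0 : K) (e : Fin m → K) :
    (Sum.elim (fun i => e0 ^ (∏ j ∈ Finset.univ.erase i, d j) * e i) e s) ^ a =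
      ∏ k, (Sum.elim (fun i => e0 ^ (∏ j ∈ Finset.univ.erase i, d j) * e i) e k) ^ w k := by
  have h1 : phiA K d (X s ^ a - monomial w (1 : K)) = 0 := h
  have h2 := congrArg (aeval (Fin.cons e0 e : Fin (m + 1) → K)) h1
  rw [map_sub, map_sub, map_zero, sub_eq_zero] at h2
  have key : ∀ p, aeval (Fin.cons e0 e : Fin (m + 1) → K) (phiA K d p) =
      aeval (Sum.elim (fun i => e0 ^ (∏ j ∈ Finset.univ.erase i, d j) * e i) e) p := by
    intro p
    rw [← AlgHom.comp_apply]
    congr 1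
    apply MvPolynomial.algHom_ext
    rintro (i | i) <;> simp [phiA]
  rw [key, key, aeval_monomial, Finsupp.prod_fintype _ _ (by simp)] at h2
  simpa using h2

/-- The support of `w` only involves the index of `s`. -/
theorem IA_supp {m : ℕ} (d : Fin m → ℕ) (i : Fin m) (s : Fin m ⊕ Fin m)
    (hs : s = Sum.inl i ∨ s = Sum.inr i) (a : ℕ)
    (w : (Fin m ⊕ Fin m) →₀ ℕ) (h : X s ^ a - monomial w (1 : K) ∈ IA K d)
    (k : Fin m) (hk : k ≠ i) : w (Sum.inl k) = 0 ∧ w (Sum.inr k) = 0 := by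
  have h1 := IA_eval K d s a w h 1 (fun l => if l = i then 1 else 0)
  have hl : (Sum.elim (fun l => (1 : K) ^ (∏ j ∈ Finset.univ.erase l, d j) *
      (if l = i then 1 else 0)) (fun l => if l = i then 1 else 0) s) ^ a = 1 := by
    rcases hs with rfl | rfl <;> simp
  rw [hl] at h1
  constructor
  all_goals
    by_contra hne
    apply one_ne_zero (α := K)
    rw [h1]
  · exact Finset.prod_eq_zero (Finset.mem_univ (Sum.inl k)) (by simp [hk, hne])
  · exact Finset.prod_eq_zero (Finset.mem_univ (Sum.inr k)) (by simp [hk, hne])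

theorem stmt15 (m : ℕ) (hm : 2 ≤ m) (d : Fin m → ℕ) (hd : ∀ i, 0 < d i) :
    (∀ (i : Fin m) (a : ℕ), 0 < a → ∀ w : (Fin m ⊕ Fin m) →₀ ℕ, w (Sum.inl i) = 0 →
      X (Sum.inl i) ^ a - monomial w (1 : K) ∉ IA K d) ∧
    (∀ (j : Fin m) (a : ℕ), 0 < a → ∀ w : (Fin m ⊕ Fin m) →₀ ℕ, w (Sum.inr j) = 0 →
      X (Sum.inr j) ^ a - monomial w (1 : K) ∉ IA K d) := by
  have hb : ∀ i, (∏ j ∈ Finset.univ.erase i, d j) ≠ 0 := fun i =>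
    Finset.prod_ne_zero_iff.2 fun j _ => (hd j).ne'
  refine ⟨fun i a ha w hw h => ?_, fun i a ha w hw h => ?_⟩
  · have hs := IA_supp K d i _ (Or.inl rfl) a w h
    have hz : ∀ k, w (Sum.inl k) = 0 := fun k => by
      by_cases hk : k = i
      · rw [hk, hw]
      · exact (hs k hk).1
    have h1 := IA_eval K d _ a w h 0 (fun _ => 1)
    simp [Fintype.prod_sum_type, hz, hb, ha.ne'] at h1
  · have hs := IA_supp K d i _ (Or.inr rfl) a w h
    have hz : ∀ k, w (Sum.inr k) = 0 := fun k => by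
      by_cases hk : k = i
      · rw [hk, hw]
      · exact (hs k hk).2
    have h1 := IA_eval K d _ a w h 0 (fun _ => 1)
    have hx : ∀ k, w (Sum.inl k) = 0 := fun k => by
      by_contra hne
      apply one_ne_zero (α := K)
      have h2 := h1.trans (Finset.prod_eq_zero (Finset.mem_univ (Sum.inl k))
        (by simp [hb, hne]))
      simpa using h2
    have h3 := IA_eval K d _ a w h 0 (fun _ => 0)
    simp [Fintype.prod_sum_type, hz, hx, ha.ne'] at h3
end

section
/- The lattice basis ideal J_L equals the intersection I_2(D) ∩ (x_1^{d_1}, y_1^{d_1}). -/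
open MvPolynomial

variable (K : Type*) [Field K]

/-- The lattice basis ideal `J_L`, generated by the binomials
`f_{1j} = x_1^{d_1} y_j^{d_j} − x_j^{d_j} y_1^{d_1}` for `2 ≤ j ≤ m`. -/
noncomputable def JL {m : ℕ} (d : Fin (m + 2) → ℕ) :
    Ideal (MvPolynomial (Fin (m + 2) ⊕ Fin (m + 2)) K) :=
  Ideal.span {g | ∃ j : Fin (m + 2), j ≠ 0 ∧ g = fIJ K d 0 j}

/-- `N` keeps the monomials outside `(x_1^{d_1}, y_1^{d_1})` and kills the others. -/
noncomputable def keepN {m : ℕ} (e : ℕ) :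
    MvPolynomial (Fin (m + 2) ⊕ Fin (m + 2)) K →ₗ[K] MvPolynomial (Fin (m + 2) ⊕ Fin (m + 2)) K :=
  (basisMonomials (Fin (m + 2) ⊕ Fin (m + 2)) K).constr K
    (fun u => if u (Sum.inl 0) < e ∧ u (Sum.inr 0) < e then monomial u 1 else 0)

lemma keepN_monomial {m : ℕ} (e : ℕ) (u : (Fin (m + 2) ⊕ Fin (m + 2)) →₀ ℕ) (c : K) :
    keepN K e (monomial u c) =
      if u (Sum.inl 0) < e ∧ u (Sum.inr 0) < e then monomial u c else 0 := by
  have h1 : (monomial u c : MvPolynomial (Fin (m + 2) ⊕ Fin (m + 2)) K) =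
      c • (basisMonomials (Fin (m + 2) ⊕ Fin (m + 2)) K) u := by
    simp [coe_basisMonomials, smul_monomial]
  rw [h1, map_smul, keepN, Module.Basis.constr_basis]
  split_ifs <;> simp [coe_basisMonomials, smul_monomial]

lemma keepN_mul_monomial {m : ℕ} (e : ℕ) (g : MvPolynomial (Fin (m + 2) ⊕ Fin (m + 2)) K)
    (v : (Fin (m + 2) ⊕ Fin (m + 2)) →₀ ℕ) (h0 : v (Sum.inl 0) = 0) (h1 : v (Sum.inr 0) = 0) :
    keepN K e (g * monomial v 1) = keepN K e g * monomial v 1 := by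
  induction g using MvPolynomial.induction_on' with
  | monomial u c =>
    rw [monomial_mul, keepN_monomial, keepN_monomial]
    simp only [Finsupp.add_apply, h0, h1, add_zero, mul_one]
    split_ifs <;> simp [monomial_mul]
  | add p q hp hq => rw [add_mul, map_add, map_add, hp, hq, add_mul]

lemma keepN_kill {m : ℕ} (e : ℕ) (g : MvPolynomial (Fin (m + 2) ⊕ Fin (m + 2)) K)
    (v : (Fin (m + 2) ⊕ Fin (m + 2)) →₀ ℕ) (h0 : e ≤ v (Sum.inl 0) ∨ e ≤ v (Sum.inr 0)) :
    keepN K e (g * monomial v 1) = 0 := by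
  induction g using MvPolynomial.induction_on' with
  | monomial u c =>
    rw [monomial_mul, keepN_monomial, if_neg]
    simp only [Finsupp.add_apply]
    omega
  | add p q hp hq => rw [add_mul, map_add, hp, hq, add_zero]

lemma keepN_span {m : ℕ} (e : ℕ) (f : MvPolynomial (Fin (m + 2) ⊕ Fin (m + 2)) K)
    (hf : f ∈ Ideal.span {X (Sum.inl (0 : Fin (m + 2))) ^ e,
        (X (Sum.inr (0 : Fin (m + 2))) ^ e : MvPolynomial (Fin (m + 2) ⊕ Fin (m + 2)) K)}) :
    keepN K e f = 0 := by
  obtain ⟨a, b, rfl⟩ := Ideal.mem_span_pair.1 hf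
  rw [map_add, X_pow_eq_monomial, X_pow_eq_monomial, keepN_kill, keepN_kill, add_zero]
  · right; simp
  · left; simp

lemma sub_keepN_mem {m : ℕ} (e : ℕ) (g : MvPolynomial (Fin (m + 2) ⊕ Fin (m + 2)) K) :
    g - keepN K e g ∈ Ideal.span {X (Sum.inl (0 : Fin (m + 2))) ^ e,
        (X (Sum.inr (0 : Fin (m + 2))) ^ e : MvPolynomial (Fin (m + 2) ⊕ Fin (m + 2)) K)} := by
  induction g using MvPolynomial.induction_on' with
  | monomial u c =>
    rw [keepN_monomial]
    split_ifs with h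
    · simp
    · rw [sub_zero]
      have key : ∀ s, e ≤ u s →
          (X s ^ e : MvPolynomial (Fin (m + 2) ⊕ Fin (m + 2)) K) ∣ monomial u c := by
        intro s hs
        refine ⟨monomial (u - Finsupp.single s e) c, ?_⟩
        rw [X_pow_eq_monomial, monomial_mul, one_mul, add_tsub_cancel_of_le]
        simpa using hs
      by_cases h1 : u (Sum.inl 0) < e
      · exact Ideal.mem_of_dvd _ (key (Sum.inr 0) (by omega)) (Ideal.subset_span (by simp))
      · exact Ideal.mem_of_dvd _ (key (Sum.inl 0) (by omega)) (Ideal.subset_span (by simp))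
  | add p q hp hq =>
    rw [map_add, add_sub_add_comm]
    exact add_mem hp hq

lemma f0j_mem {m : ℕ} (d : Fin (m + 2) → ℕ) (j : Fin (m + 2)) :
    fIJ K d 0 j ∈ Ideal.span {X (Sum.inl (0 : Fin (m + 2))) ^ d 0,
        (X (Sum.inr (0 : Fin (m + 2))) ^ d 0 : MvPolynomial (Fin (m + 2) ⊕ Fin (m + 2)) K)} :=
  Ideal.mem_span_pair.2 ⟨X (Sum.inr j) ^ d j, - X (Sum.inl j) ^ d j, by rw [fIJ]; ring⟩

lemma mul_fIJ_mem {m : ℕ} (d : Fin (m + 2) → ℕ) (i j : Fin (m + 2)) (hi : i ≠ 0) (hj : j ≠ 0)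
    (g : MvPolynomial (Fin (m + 2) ⊕ Fin (m + 2)) K)
    (hg : g ∈ Ideal.span {X (Sum.inl (0 : Fin (m + 2))) ^ d 0,
        (X (Sum.inr (0 : Fin (m + 2))) ^ d 0 : MvPolynomial (Fin (m + 2) ⊕ Fin (m + 2)) K)}) :
    g * fIJ K d i j ∈ JL K d := by
  obtain ⟨a, b, rfl⟩ := Ideal.mem_span_pair.1 hg
  have h1 : fIJ K d 0 i ∈ JL K d := Ideal.subset_span ⟨i, hi, rfl⟩
  have h2 : fIJ K d 0 j ∈ JL K d := Ideal.subset_span ⟨j, hj, rfl⟩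
  have h3 := (JL K d).sub_mem
    ((JL K d).mul_mem_left (a * X (Sum.inl i) ^ d i + b * X (Sum.inr i) ^ d i) h2)
    ((JL K d).mul_mem_left (a * X (Sum.inl j) ^ d j + b * X (Sum.inr j) ^ d j) h1)
  convert h3 using 1
  simp only [fIJ]
  ring

lemma keepN_mul_fIJ {m : ℕ} (d : Fin (m + 2) → ℕ) (i j : Fin (m + 2)) (hi : i ≠ 0) (hj : j ≠ 0)
    (e : ℕ) (g : MvPolynomial (Fin (m + 2) ⊕ Fin (m + 2)) K) :
    keepN K e (g * fIJ K d i j) = keepN K e g * fIJ K d i j := by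
  simp only [fIJ, X_pow_eq_monomial, monomial_mul, mul_sub, map_sub, one_mul]
  rw [keepN_mul_monomial, keepN_mul_monomial] <;> simp [hi, hj]

lemma I2D_sub_keepN {m : ℕ} (d : Fin (m + 2) → ℕ)
    (f : MvPolynomial (Fin (m + 2) ⊕ Fin (m + 2)) K) (hf : f ∈ I2D K d) :
    f - keepN K (d 0) f ∈ JL K d := by
  rw [I2D] at hf
  induction hf using Submodule.closure_induction with
  | zero => simp
  | add p q _ _ hp hq =>
    rw [map_add, add_sub_add_comm]
    exact add_mem hp hq
  | smul_mem g x hx =>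
    obtain ⟨i, j, hij, rfl⟩ := hx
    rw [smul_eq_mul]
    have hj : j ≠ 0 := (lt_of_le_of_lt (Fin.zero_le i) hij).ne'
    by_cases hi : i = 0
    · subst hi
      rw [keepN_span K (d 0) _ (Ideal.mul_mem_left _ g (f0j_mem K d j)), sub_zero]
      exact Ideal.mul_mem_left _ _ (Ideal.subset_span ⟨j, hj, rfl⟩)
    · rw [keepN_mul_fIJ K d i j hi hj, ← sub_mul]
      exact mul_fIJ_mem K d i j hi hj _ (sub_keepN_mem K (d 0) g)

theorem stmt16 (m : ℕ) (d : Fin (m + 2) → ℕ) (hd : ∀ i, 0 < d i) :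
    JL K d = I2D K d ⊓
      Ideal.span {X (Sum.inl (0 : Fin (m + 2))) ^ d 0,
        X (Sum.inr (0 : Fin (m + 2))) ^ d 0} := by
  apply le_antisymm
  · rw [JL, Ideal.span_le]
    rintro _ ⟨j, hj, rfl⟩
    exact ⟨Ideal.subset_span ⟨0, j, Fin.pos_of_ne_zero hj, rfl⟩, f0j_mem K d j⟩
  · rintro f ⟨h1, h2⟩
    have h := I2D_sub_keepN K d f h1
    rwa [keepN_span K (d 0) f h2, sub_zero] at h
end
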